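/- arXiv:1807.01894 — 3 statements merged into one kernel-verified Lean document; each statement's English description precedes it below -/
import Mathlib

section
/- Let E ∈ GL_d(ℂ) with d > 2 be such that the solutions q of q² + tr(EᵀE⁻¹)q + 1 = 0 are generic (q = ±1 or not a root of unity), so that the quantum automorphism group B(E) of the bilinear form E is cosemisimple. Then GKdim B(E) = ∞. -/
/-!
Background definitions: comodules over a Hopf algebra, simple comodules, direct
summands, supports, subcoalgebras, cosemisimplicity, Gelfand-Kirillov dimension,
and (measured) Grothendieck semirings of cosemisimple Hopf algebras.
-/

open TensorProduct

/-- The data of a coaction of a Hopf algebra `H` on a `k`-vector space `X`: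
a linear map `ρ : X → X ⊗ H`.  The comodule axioms are recorded separately in
`Comod.IsComodule`. -/
structure Comod (k : Type) [Field k] (H : Type) [Ring H] [HopfAlgebra k H] : Type 1 where
  X : Type
  [addCommGroup : AddCommGroup X]
  [module : Module k X]
  ρ : X →ₗ[k] X ⊗[k] H

attribute [instance] Comod.addCommGroup Comod.module

namespace Comod

variable {k : Type} [Field k] {H : Type} [Ring H] [HopfAlgebra k H]

/-- The trivial `H`-comodule `𝟏`, i.e. `k` with coaction `x ↦ x ⊗ 1`. -/
noncomputable def unit (k : Type) [Field k] (H : Type) [Ring H] [HopfAlgebra k H] :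
    Comod k H where
  X := k
  ρ := (TensorProduct.mk k k H).flip 1

/-- The regular comodule: `H` coacting on itself by comultiplication. -/
noncomputable def regular (k : Type) [Field k] (H : Type) [Ring H] [HopfAlgebra k H] :
    Comod k H where
  X := H
  ρ := Coalgebra.comul

/-- Tensor product of comodules: the coaction on `M ⊗ N` is
`(id ⊗ id ⊗ μ_H) ∘ (id ⊗ τ ⊗ id) ∘ (ρ_M ⊗ ρ_N)`. -/
noncomputable def tensor (M N : Comod k H) : Comod k H where
  X := M.X ⊗[k] N.X
  ρ := (LinearMap.mul' k H).lTensor (M.X ⊗[k] N.X)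
        ∘ₗ (TensorProduct.tensorTensorTensorComm k M.X H N.X H).toLinearMap
        ∘ₗ TensorProduct.map M.ρ N.ρ

/-- Binary direct sum of comodules. -/
noncomputable def dsum (M N : Comod k H) : Comod k H where
  X := M.X × N.X
  ρ := (LinearMap.inl k M.X N.X).rTensor H ∘ₗ M.ρ ∘ₗ LinearMap.fst k M.X N.X
     + (LinearMap.inr k M.X N.X).rTensor H ∘ₗ N.ρ ∘ₗ LinearMap.snd k M.X N.X

/-- Finite direct sum of a family of comodules. -/
noncomputable def pi {ι : Type} [Fintype ι] (S : ι → Comod k H) : Comod k H where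
  X := ∀ i, (S i).X
  ρ := letI := Classical.decEq ι
    ∑ i : ι, (LinearMap.single k (fun j => (S j).X) i).rTensor H ∘ₗ (S i).ρ
        ∘ₗ LinearMap.proj i

/-- `n`-th tensor power of a comodule (`M^{⊗0} = 𝟏`, `M^{⊗1} = M`). -/
noncomputable def tpow (M : Comod k H) : ℕ → Comod k H
  | 0 => unit k H
  | 1 => M
  | n + 2 => (M.tpow (n + 1)).tensor M

/-- A linear map is a map of comodules if it intertwines the coactions. -/
def IsHom (M N : Comod k H) (f : M.X →ₗ[k] N.X) : Prop :=
  N.ρ ∘ₗ f = f.rTensor H ∘ₗ M.ρ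

/-- Isomorphism of comodules. -/
def Iso (M N : Comod k H) : Prop :=
  ∃ e : M.X ≃ₗ[k] N.X, IsHom M N e.toLinearMap

/-- The comodule axioms (coassociativity and counitality) for a coaction. -/
def IsComodule (M : Comod k H) : Prop :=
  (M.ρ.rTensor H ∘ₗ M.ρ =
      (TensorProduct.assoc k M.X H H).symm.toLinearMap
        ∘ₗ (Coalgebra.comul (R := k) (A := H)).lTensor M.X ∘ₗ M.ρ) ∧
  (TensorProduct.rid k M.X).toLinearMap
      ∘ₗ (Coalgebra.counit (R := k) (A := H)).lTensor M.X ∘ₗ M.ρ = LinearMap.id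

/-- A subspace `N ⊆ M` is a subcomodule if the coaction restricts to `N ⊗ H`. -/
def IsSubcomodule (M : Comod k H) (N : Submodule k M.X) : Prop :=
  ∀ x ∈ N, M.ρ x ∈ LinearMap.range (N.subtype.rTensor H)

/-- Simple (hence finite-dimensional) comodules. -/
def IsSimple (M : Comod k H) : Prop :=
  M.IsComodule ∧ Nontrivial M.X ∧ FiniteDimensional k M.X ∧
    ∀ N : Submodule k M.X, M.IsSubcomodule N → N = ⊥ ∨ N = ⊤

/-- `S` is a direct summand of `M` (as comodules): the inclusion splits. -/
def DirectSummand (S M : Comod k H) : Prop :=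
  ∃ (i : S.X →ₗ[k] M.X) (p : M.X →ₗ[k] S.X),
    IsHom S M i ∧ IsHom M S p ∧ p ∘ₗ i = LinearMap.id

/-- `C` is the support of the comodule `M`: the (unique) minimal subspace
`C ⊆ H` with `ρ(M) ⊆ M ⊗ C`. -/
def IsSupport (M : Comod k H) (C : Submodule k H) : Prop :=
  (∀ x : M.X, M.ρ x ∈ LinearMap.range (C.subtype.lTensor M.X)) ∧
    ∀ C' : Submodule k H,
      (∀ x : M.X, M.ρ x ∈ LinearMap.range (C'.subtype.lTensor M.X)) → C ≤ C'

end Comod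

/-- A subspace `C ⊆ H` is a subcoalgebra if `Δ(C) ⊆ C ⊗ C`. -/
def IsSubcoalgebra (k : Type) [Field k] (H : Type) [Ring H] [HopfAlgebra k H]
    (C : Submodule k H) : Prop :=
  ∀ x ∈ C, Coalgebra.comul (R := k) x ∈
    LinearMap.range (TensorProduct.map C.subtype C.subtype)

/-- A simple subcoalgebra: a nonzero subcoalgebra with no proper nonzero
subcoalgebras. -/
def IsSimpleSubcoalgebra (k : Type) [Field k] (H : Type) [Ring H] [HopfAlgebra k H]
    (C : Submodule k H) : Prop :=
  IsSubcoalgebra k H C ∧ C ≠ ⊥ ∧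
    ∀ D : Submodule k H, D ≤ C → IsSubcoalgebra k H D → D = ⊥ ∨ D = C

/-- A Hopf algebra is cosemisimple if every subcomodule of every comodule is a
direct summand. -/
def IsCosemisimple (k : Type) [Field k] (H : Type) [Ring H] [HopfAlgebra k H] : Prop :=
  ∀ M : Comod k H, M.IsComodule →
    ∀ N : Submodule k M.X, M.IsSubcomodule N →
      ∃ N' : Submodule k M.X, M.IsSubcomodule N' ∧ IsCompl N N'

open scoped ENNReal in
/-- The Gelfand-Kirillov dimension of a `k`-algebra `A`:
`sup_V limsup_n log(dim V^n)/log n` over finite-dimensional subspaces `V ⊆ A`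
(for a finitely generated algebra this agrees with the value computed from any
finite-dimensional generating subspace containing `1`). -/
noncomputable def GKdim (k : Type) (A : Type) [Field k] [Ring A] [Algebra k A] : ℝ≥0∞ :=
  ⨆ (V : Submodule k A) (_ : FiniteDimensional k V),
    Filter.limsup
      (fun n : ℕ => ENNReal.ofReal
        (Real.log (Module.finrank k ↥(V ^ n)) / Real.log n)) Filter.atTop

/-- The (measured) Grothendieck semiring of a cosemisimple Hopf algebra `H`:
a commutative semiring `R` together with a class map `cls` on finite-dimensional
`H`-comodules which is constant on isomorphism classes, additive on direct sums,
multiplicative on tensor products, sends `𝟏` to `1`, and induces a bijection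
between iso-classes of finite-dimensional comodules and elements of `R`.
The dimension function `d_H` on `R_+(H)` is recovered as `cls M ↦ dim_k M`. -/
structure GrSemiring (k : Type) [Field k] (H : Type) [Ring H] [HopfAlgebra k H] :
    Type 1 where
  R : Type
  [commSemiring : CommSemiring R]
  cls : Comod k H → R
  cls_one : cls (Comod.unit k H) = 1
  cls_iso : ∀ M N : Comod k H, M.IsComodule → N.IsComodule →
    FiniteDimensional k M.X → FiniteDimensional k N.X → Comod.Iso M N → cls M = cls N
  cls_dsum : ∀ M N : Comod k H, M.IsComodule → N.IsComodule →
    FiniteDimensional k M.X → FiniteDimensional k N.X →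
      cls (M.dsum N) = cls M + cls N
  cls_tensor : ∀ M N : Comod k H, M.IsComodule → N.IsComodule →
    FiniteDimensional k M.X → FiniteDimensional k N.X →
      cls (M.tensor N) = cls M * cls N
  cls_surj : ∀ r : R, ∃ M : Comod k H, M.IsComodule ∧ FiniteDimensional k M.X ∧ cls M = r
  cls_inj : ∀ M N : Comod k H, M.IsComodule → N.IsComodule →
    FiniteDimensional k M.X → FiniteDimensional k N.X → cls M = cls N → Comod.Iso M N

attribute [instance] GrSemiring.commSemiring

namespace Comod

section helpers

variable {k : Type} [Field k] {H : Type} [Ring H] [HopfAlgebra k H]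

/-- The coefficients of `M` lie in `C`. -/
def CoeffIn (M : Comod k H) (C : Submodule k H) : Prop :=
  ∀ x : M.X, M.ρ x ∈ LinearMap.range (C.subtype.lTensor M.X)

theorem CoeffIn.of_surj {M N : Comod k H} {C : Submodule k H} (h : M.CoeffIn C)
    (f : M.X →ₗ[k] N.X) (hf : IsHom M N f) (hs : Function.Surjective f) : N.CoeffIn C := by
  intro y
  obtain ⟨x, rfl⟩ := hs y
  obtain ⟨a, ha⟩ := h x
  refine ⟨f.rTensor C a, ?_⟩
  have h1 : N.ρ (f x) = f.rTensor H (M.ρ x) := LinearMap.congr_fun hf x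
  rw [h1, ← ha]
  have h2 : C.subtype.lTensor N.X ∘ₗ f.rTensor C = f.rTensor H ∘ₗ C.subtype.lTensor M.X := by
    rw [LinearMap.lTensor_comp_rTensor, LinearMap.rTensor_comp_lTensor]
  exact LinearMap.congr_fun h2 a

theorem isHom_comp {M N P : Comod k H} {f : M.X →ₗ[k] N.X} {g : N.X →ₗ[k] P.X}
    (hf : IsHom M N f) (hg : IsHom N P g) : IsHom M P (g ∘ₗ f) := by
  unfold IsHom at *
  rw [← LinearMap.comp_assoc, hg, LinearMap.comp_assoc, hf, ← LinearMap.comp_assoc,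
    ← LinearMap.rTensor_comp]

theorem isHom_fst (M N : Comod k H) :
    IsHom (M.dsum N) M (LinearMap.fst k M.X N.X) := by
  unfold IsHom
  change M.ρ ∘ₗ LinearMap.fst k M.X N.X = (LinearMap.fst k M.X N.X).rTensor H ∘ₗ
    ((LinearMap.inl k M.X N.X).rTensor H ∘ₗ M.ρ ∘ₗ LinearMap.fst k M.X N.X
     + (LinearMap.inr k M.X N.X).rTensor H ∘ₗ N.ρ ∘ₗ LinearMap.snd k M.X N.X)
  have h1 : (LinearMap.fst k M.X N.X).rTensor H ∘ₗ (LinearMap.inl k M.X N.X).rTensor H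
      = LinearMap.id := by
    rw [← LinearMap.rTensor_comp, LinearMap.fst_comp_inl, LinearMap.rTensor_id]
  have h2 : (LinearMap.fst k M.X N.X).rTensor H ∘ₗ (LinearMap.inr k M.X N.X).rTensor H
      = 0 := by
    rw [← LinearMap.rTensor_comp, LinearMap.fst_comp_inr, LinearMap.rTensor_zero]
  refine LinearMap.ext fun x => ?_
  have h1' := LinearMap.congr_fun h1 (M.ρ x.1)
  have h2' := LinearMap.congr_fun h2 (N.ρ x.2)
  simp only [LinearMap.comp_apply, LinearMap.add_apply, map_add, LinearMap.id_apply,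
    LinearMap.zero_apply, LinearMap.fst_apply, LinearMap.snd_apply] at h1' h2' ⊢
  rw [h1', h2', add_zero]

theorem CoeffIn.tensor {M N : Comod k H} {C D : Submodule k H} (hM : M.CoeffIn C)
    (hN : N.CoeffIn D) : (M.tensor N).CoeffIn (C * D) := by
  intro x
  change M.X ⊗[k] N.X at x
  change ((LinearMap.mul' k H).lTensor (M.X ⊗[k] N.X)
        ∘ₗ (TensorProduct.tensorTensorTensorComm k M.X H N.X H).toLinearMap
        ∘ₗ TensorProduct.map M.ρ N.ρ) x ∈
    LinearMap.range ((C * D).subtype.lTensor (M.X ⊗[k] N.X))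
  induction x using TensorProduct.induction_on with
  | zero => rw [map_zero]; exact zero_mem _
  | add x y hx hy => rw [map_add]; exact add_mem hx hy
  | tmul m n =>
    obtain ⟨a, ha⟩ := hM m
    obtain ⟨b, hb⟩ := hN n
    simp only [LinearMap.comp_apply, TensorProduct.map_tmul, LinearEquiv.coe_coe]
    rw [← ha, ← hb]
    clear ha hb
    induction a using TensorProduct.induction_on with
    | zero => simp
    | add x y hx hy =>
      simp only [map_add, TensorProduct.add_tmul]; exact add_mem hx hy
    | tmul m' c =>
      induction b using TensorProduct.induction_on with
      | zero => simp
      | add x y hx hy =>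
        simp only [map_add, TensorProduct.tmul_add]; exact add_mem hx hy
      | tmul n' c' =>
        refine ⟨(m' ⊗ₜ n') ⊗ₜ ⟨(c : H) * c', Submodule.mul_mem_mul c.2 c'.2⟩, ?_⟩
        simp

theorem exists_coeffIn (M : Comod k H) [FiniteDimensional k M.X] :
    ∃ C : Submodule k H, FiniteDimensional k C ∧ M.CoeffIn C := by
  let b := Module.finBasis k M.X
  obtain ⟨C, hC, hs⟩ := TensorProduct.exists_finite_submodule_right_of_setFinite
    (Set.range fun i => M.ρ (b i)) (Set.finite_range _)
  refine ⟨C, hC, fun x => ?_⟩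
  rw [← b.sum_repr x, map_sum]
  refine sum_mem fun i _ => ?_
  rw [map_smul]
  exact Submodule.smul_mem _ _ (hs ⟨i, rfl⟩)

/-- The map `M → H` attached to a functional. -/
noncomputable def coeffMap (M : Comod k H) (φ : M.X →ₗ[k] k) : M.X →ₗ[k] H :=
  (TensorProduct.lid k H).toLinearMap ∘ₗ φ.rTensor H ∘ₗ M.ρ

theorem counit_coeffMap (M : Comod k H) (hM : M.IsComodule) (φ : M.X →ₗ[k] k) (x : M.X) :
    Coalgebra.counit (R := k) (M.coeffMap φ x) = φ x := by
  have h : (Coalgebra.counit (R := k) (A := H)) ∘ₗ (TensorProduct.lid k H).toLinearMap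
      ∘ₗ φ.rTensor H = φ ∘ₗ (TensorProduct.rid k M.X).toLinearMap
      ∘ₗ (Coalgebra.counit (R := k) (A := H)).lTensor M.X := by
    ext m c
    simp [mul_comm]
  have h1 := LinearMap.congr_fun h (M.ρ x)
  have h2 := LinearMap.congr_fun hM.2 x
  simp only [LinearMap.comp_apply, LinearMap.id_apply] at h1 h2
  rw [h2] at h1
  exact h1

theorem rTensor_coeffMap (M : Comod k H) (hM : M.IsComodule) (φ : M.X →ₗ[k] k) (x : M.X) :
    (M.coeffMap φ).rTensor H (M.ρ x) = Coalgebra.comul (R := k) (M.coeffMap φ x) := by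
  have h : ((TensorProduct.lid k H).toLinearMap ∘ₗ φ.rTensor H).rTensor H
      ∘ₗ (TensorProduct.assoc k M.X H H).symm.toLinearMap
        ∘ₗ (Coalgebra.comul (R := k) (A := H)).lTensor M.X
      = Coalgebra.comul (R := k) (A := H) ∘ₗ (TensorProduct.lid k H).toLinearMap
        ∘ₗ φ.rTensor H := by
    apply TensorProduct.ext'
    intro m c
    simp only [LinearMap.comp_apply, LinearMap.lTensor_tmul, LinearMap.rTensor_tmul,
      LinearEquiv.coe_coe, TensorProduct.lid_tmul, map_smul]
    generalize Coalgebra.comul (R := k) c = t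
    induction t using TensorProduct.induction_on with
    | zero => simp
    | add x y hx hy => simp only [TensorProduct.tmul_add, map_add, smul_add, hx, hy]
    | tmul a b => simp [TensorProduct.smul_tmul']
  have h1 := LinearMap.congr_fun h (M.ρ x)
  have h2 := LinearMap.congr_fun hM.1 x
  simp only [LinearMap.comp_apply] at h1 h2
  rw [← h2] at h1
  rw [coeffMap, ← LinearMap.comp_assoc, LinearMap.rTensor_comp]
  exact h1

theorem finrank_le_of_coeffIn (M : Comod k H) (hM : M.IsSimple) (C : Submodule k H)
    [FiniteDimensional k C] (hC : M.CoeffIn C) :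
    Module.finrank k M.X ≤ Module.finrank k C := by
  obtain ⟨hc, hnt, hfd, hs⟩ := hM
  obtain ⟨x₀, hx₀⟩ := exists_ne (0 : M.X)
  obtain ⟨φ, hφ⟩ : ∃ φ : Module.Dual k M.X, φ x₀ ≠ 0 := by
    by_contra! hcon
    exact hx₀ ((Module.forall_dual_apply_eq_zero_iff k x₀).1 hcon)
  have hker : LinearMap.ker (M.coeffMap φ) = ⊥ := by
    rcases hs (LinearMap.ker (M.coeffMap φ)) (by
      intro x hx
      have hex : Function.Exact (LinearMap.ker (M.coeffMap φ)).subtype (M.coeffMap φ) :=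
        LinearMap.exact_subtype_ker_map _
      have := Module.Flat.rTensor_exact H hex
      refine (this (M.ρ x)).1 ?_
      rw [rTensor_coeffMap M hc, LinearMap.mem_ker.1 hx, map_zero]) with h | h
    · exact h
    · exfalso
      have : x₀ ∈ LinearMap.ker (M.coeffMap φ) := h ▸ Submodule.mem_top
      have h2 := counit_coeffMap M hc φ x₀
      rw [LinearMap.mem_ker.1 this, map_zero] at h2
      exact hφ h2.symm
  have hmem : ∀ x, M.coeffMap φ x ∈ C := by
    intro x
    obtain ⟨a, ha⟩ := hC x
    simp only [coeffMap, LinearMap.comp_apply, LinearEquiv.coe_coe]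
    rw [← ha]
    clear ha
    induction a using TensorProduct.induction_on with
    | zero => simp
    | add x y hx hy => simp only [map_add]; exact add_mem hx hy
    | tmul m c => simpa using C.smul_mem _ c.2
  refine LinearMap.finrank_le_finrank_of_injective
    (f := (M.coeffMap φ).codRestrict C hmem) ?_
  rw [← LinearMap.ker_eq_bot, LinearMap.ker_codRestrict, hker]

end helpers

end Comod

theorem GKdim_eq_top_of_pow_le {k A : Type} [Field k] [Ring A] [Algebra k A]
    (V : Submodule k A) [FiniteDimensional k V]
    (h : ∀ n, 2 ^ (n + 1) ≤ Module.finrank k ↥(V ^ (n + 1))) : GKdim k A = ⊤ := by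
  rw [eq_top_iff]
  refine le_trans ?_ (le_iSup₂_of_le V ‹_› le_rfl)
  have ht : Filter.Tendsto (fun n : ℕ => ENNReal.ofReal
        (Real.log (Module.finrank k ↥(V ^ n)) / Real.log n)) Filter.atTop (nhds ⊤) := by
    refine ENNReal.tendsto_ofReal_nhds_top.2 ?_
    have h0 : Filter.Tendsto (fun n : ℕ => Real.log 2 * ((n : ℝ) / Real.log n))
        Filter.atTop Filter.atTop := by
      refine Filter.Tendsto.const_mul_atTop (Real.log_pos one_lt_two) ?_
      have h1 : Filter.Tendsto (fun x : ℝ => x / Real.log x) Filter.atTop Filter.atTop := by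
        have h2 := (Real.isLittleO_log_id_atTop).tendsto_div_nhds_zero
        have h3 : Filter.Tendsto (fun x : ℝ => Real.log x / x) Filter.atTop
            (nhdsWithin 0 (Set.Ioi 0)) := by
          refine tendsto_nhdsWithin_iff.2 ⟨h2, ?_⟩
          filter_upwards [Filter.eventually_gt_atTop 1] with x hx
          exact div_pos (Real.log_pos hx) (by linarith)
        refine h3.inv_tendsto_nhdsGT_zero.congr fun x => ?_
        simp
      exact h1.comp tendsto_natCast_atTop_atTop
    refine Filter.tendsto_atTop_mono' _ ?_ h0
    filter_upwards [Filter.eventually_ge_atTop 2] with n hn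
    obtain ⟨m, rfl⟩ : ∃ m, n = m + 1 := ⟨n - 1, by omega⟩
    rw [← mul_div_assoc]
    have : (0 : ℝ) ≤ Real.log ((m + 1 : ℕ) : ℝ) := Real.log_natCast_nonneg _
    refine div_le_div_of_nonneg_right ?_ this
    rw [mul_comm, ← Real.log_pow]
    apply Real.log_le_log (by positivity)
    exact_mod_cast h m
  rw [ht.limsup_eq]

/-- Example 3.9 of the paper, case `d > 2`.  Let
`E ∈ GL_d(ℂ)` with `d > 2` be such that the solutions `q` of
`q² + tr(EᵀE⁻¹)q + 1 = 0` are generic (`q = ±1` or not a root of unity), and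
let `B = B(E)` be the Dubois-Violette-Launer quantum automorphism group of the
bilinear form `E`: a finitely generated cosemisimple Hopf algebra whose
comodule theory is that of `O_q(SL(2))` — its simple comodules are
`S_0 = 𝟏, S_1, S_2, …` (every simple comodule isomorphic to exactly one `S_n`)
with Clebsch-Gordan fusion `S_1 ⊗ S_{n+1} ≅ S_{n+2} ⊕ S_n`, where `S_1` is the
fundamental `d`-dimensional comodule `V` (so the semiring isomorphism
`R_+(B(E)) ≅ R_+(O_q(SL(2)))` sends `[V]` to the `2`-dimensional fundamental
class).  Then `GKdim B(E) = ∞`. -/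
theorem stmt10 (d : ℕ) (hd : 2 < d)
    (E : Matrix (Fin d) (Fin d) ℂ) (hE : IsUnit E)
    (q : ℂ) (hq : q ^ 2 + (E.transpose * E⁻¹).trace * q + 1 = 0)
    (hgen : q = 1 ∨ q = -1 ∨ ∀ n : ℕ, 0 < n → q ^ n ≠ 1)
    (B : Type) [Ring B] [HopfAlgebra ℂ B]
    (hfg : Algebra.FiniteType ℂ B) (hcss : IsCosemisimple ℂ B)
    (S : ℕ → Comod ℂ B)
    (hsimple : ∀ n, (S n).IsSimple)
    (hcomplete : ∀ M : Comod ℂ B, M.IsSimple → ∃ n, Comod.Iso M (S n))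
    (hdistinct : ∀ n m, Comod.Iso (S n) (S m) → n = m)
    (hunit : Comod.Iso (S 0) (Comod.unit ℂ B))
    (hfund : Module.finrank ℂ (S 1).X = d)
    (hfus : ∀ n, Comod.Iso ((S 1).tensor (S (n + 1))) ((S (n + 2)).dsum (S n))) :
    GKdim ℂ B = ⊤ := by
  have hfd : ∀ n, FiniteDimensional ℂ (S n).X := fun n => (hsimple n).2.2.1
  obtain ⟨W, hW, hW1⟩ := Comod.exists_coeffIn (S 1)
  have hcoeff : ∀ n, (S (n + 1)).CoeffIn (W ^ (n + 1)) := by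
    intro n
    induction n with
    | zero => simpa using hW1
    | succ n ih =>
      obtain ⟨e, he⟩ := hfus n
      have h1 := (hW1.tensor ih).of_surj _
        (Comod.isHom_comp he (Comod.isHom_fst (S (n + 2)) (S n)))
        (by
          intro y
          obtain ⟨z, hz⟩ := e.surjective (y, 0)
          exact ⟨z, by
            change (e z).1 = y
            rw [hz]⟩)
      rw [← pow_succ'] at h1
      exact h1
  have hrec : ∀ n, d * Module.finrank ℂ (S (n + 1)).X =
      Module.finrank ℂ (S (n + 2)).X + Module.finrank ℂ (S n).X := by
    intro n
    obtain ⟨e, -⟩ := hfus n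
    change (S 1).X ⊗[ℂ] (S (n + 1)).X ≃ₗ[ℂ] (S (n + 2)).X × (S n).X at e
    have := e.finrank_eq
    rw [Module.finrank_tensorProduct, Module.finrank_prod, hfund] at this
    exact this
  have h0 : Module.finrank ℂ (S 0).X = 1 := by
    obtain ⟨e, -⟩ := hunit
    change (S 0).X ≃ₗ[ℂ] ℂ at e
    rw [e.finrank_eq, Module.finrank_self]
  have hdouble : ∀ n, 2 * Module.finrank ℂ (S n).X ≤ Module.finrank ℂ (S (n + 1)).X := by
    intro n
    induction n with
    | zero => rw [h0, hfund]; omega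
    | succ n ih =>
      have := hrec n
      nlinarith
  have hgrow : ∀ n, 2 ^ n ≤ Module.finrank ℂ (S n).X := by
    intro n
    induction n with
    | zero => rw [h0]; simp
    | succ n ih =>
      have := hdouble n
      rw [pow_succ]
      omega
  have hWpow : ∀ n, FiniteDimensional ℂ ↥(W ^ n) := fun n =>
    Module.Finite.iff_fg.2 ((Module.Finite.iff_fg.1 hW).pow n)
  refine GKdim_eq_top_of_pow_le W fun n => ?_
  exact (hgrow _).trans (Comod.finrank_le_of_coeffIn _ (hsimple _) _ (hcoeff n))
end

section
/- Let E, F ∈ GL_2(ℂ) satisfy FᵀEᵀEF = λI for some λ ∈ ℂ^×, and suppose the solutions q of q² − λ^{−1/2} tr(EᵀE⁻¹) q + 1 = 0 are generic (q = ±1 or not a root of unity), so that Mrozinski's quantum group G(E,F) is cosemisimple. Then GKdim G(E,F) = dim GL(2) = 4. -/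
/-!
Background definitions: comodules over a Hopf algebra, simple comodules, direct
summands, supports, subcoalgebras, cosemisimplicity, Gelfand-Kirillov dimension,
and (measured) Grothendieck semirings of cosemisimple Hopf algebras.
-/

open TensorProduct

open TensorProduct
namespace Comod

section general
variable {k : Type} [Field k] {H : Type} [Ring H] [HopfAlgebra k H]

/-- the slice map `id ⊗ f`. -/
noncomputable def slice (k : Type) [Field k] {H : Type} [AddCommGroup H] [Module k H]
    (X : Type) [AddCommGroup X] [Module k X]
    (f : Module.Dual k H) : X ⊗[k] H →ₗ[k] X :=
  (TensorProduct.rid k X).toLinearMap ∘ₗ f.lTensor X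

@[simp] lemma slice_tmul {X : Type} [AddCommGroup X] [Module k X]
    (f : Module.Dual k H) (x : X) (h : H) : slice k X f (x ⊗ₜ h) = f h • x := by
  simp [slice]

lemma slice_rTensor {X Y : Type} [AddCommGroup X] [Module k X] [AddCommGroup Y] [Module k Y]
    (f : Module.Dual k H) (φ : X →ₗ[k] Y) (u : X ⊗[k] H) :
    slice k Y f (φ.rTensor H u) = φ (slice k X f u) := by
  induction u with
  | zero => simp
  | tmul x y => simp
  | add x y hx hy => simp only [map_add, hx, hy]

lemma exists_repr {X : Type} [AddCommGroup X] [Module k X] (u : X ⊗[k] H) :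
    ∃ s : Finset (Module.Basis.ofVectorSpaceIndex k H),
      u = ∑ i ∈ s, slice k X ((Module.Basis.ofVectorSpace k H).coord i) u ⊗ₜ
        (Module.Basis.ofVectorSpace k H i) := by
  classical
  set b := Module.Basis.ofVectorSpace k H
  refine ⟨(TensorProduct.equivFinsuppOfBasisRight (M := X) b u).support, ?_⟩
  conv_lhs => rw [← (TensorProduct.equivFinsuppOfBasisRight (M := X) b).symm_apply_apply u]
  rw [TensorProduct.equivFinsuppOfBasisRight_symm_apply, Finsupp.sum]
  refine Finset.sum_congr rfl fun i _ => ?_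
  rw [TensorProduct.equivFinsuppOfBasisRight_apply]
  rfl

lemma ext_slice {X : Type} [AddCommGroup X] [Module k X] {u v : X ⊗[k] H}
    (h : ∀ f, slice k X f u = slice k X f v) : u = v := by
  rw [← sub_eq_zero]
  obtain ⟨s, hs⟩ := exists_repr (u - v)
  rw [hs]
  refine Finset.sum_eq_zero fun i _ => ?_
  rw [map_sub, h, sub_self, zero_tmul]

lemma mem_range_rTensor {X : Type} [AddCommGroup X] [Module k X] (N : Submodule k X)
    (u : X ⊗[k] H) (h : ∀ f, slice k X f u ∈ N) :
    u ∈ LinearMap.range (N.subtype.rTensor H) := by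
  obtain ⟨s, hs⟩ := exists_repr u
  rw [hs]
  refine Submodule.sum_mem _ fun i _ => ⟨(⟨_, h ((Module.Basis.ofVectorSpace k H).coord i)⟩ : N) ⊗ₜ
    (Module.Basis.ofVectorSpace k H i), ?_⟩
  simp

lemma slice_mem {X : Type} [AddCommGroup X] [Module k X] (N : Submodule k X)
    (u : X ⊗[k] H) (h : u ∈ LinearMap.range (N.subtype.rTensor H)) (f : Module.Dual k H) :
    slice k X f u ∈ N := by
  obtain ⟨v, rfl⟩ := h
  rw [slice_rTensor]
  exact (slice k N f v).2

/-- action of functionals on a comodule. -/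
noncomputable def act (M : Comod k H) (f : Module.Dual k H) : Module.End k M.X :=
  slice k M.X f ∘ₗ M.ρ

/-- convolution. -/
noncomputable def conv (f g : Module.Dual k H) : Module.Dual k H :=
  LinearMap.mul' k k ∘ₗ TensorProduct.map f g ∘ₗ Coalgebra.comul

lemma act_mul {M : Comod k H} (hM : M.IsComodule) (f g : Module.Dual k H) :
    act M f * act M g = act M (conv f g) := by
  ext x
  have h := congrArg (fun φ => φ x) hM.1
  simp only [LinearMap.comp_apply, LinearEquiv.coe_coe] at h
  have h2 : ∀ v : M.X ⊗[k] H, act M f (slice k M.X g v) =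
      slice k M.X f (slice k (M.X ⊗[k] H) g (M.ρ.rTensor H v)) := by
    intro v
    rw [slice_rTensor]; rfl
  change act M f (slice k M.X g (M.ρ x)) = slice k M.X (conv f g) (M.ρ x)
  rw [h2, h]
  generalize M.ρ x = w
  induction w with
  | zero => simp
  | add a b ha hb => simp only [map_add, ha, hb]
  | tmul y c =>
    simp only [LinearMap.lTensor_tmul, slice_tmul, conv, LinearMap.comp_apply]
    generalize (Coalgebra.comul (R := k) c) = d
    induction d with
    | zero => simp
    | add a b ha hb => simp only [map_add, tmul_add, ha, hb, add_smul]
    | tmul a b => simp [smul_smul, mul_comm]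

lemma act_counit {M : Comod k H} (hM : M.IsComodule) :
    act M (Coalgebra.counit (R := k) (A := H)) = 1 := hM.2

lemma isComodule_iff (M : Comod k H) : M.IsComodule ↔
    act M (Coalgebra.counit (R := k) (A := H)) = 1 ∧
      ∀ f g, act M f * act M g = act M (conv f g) := by
  refine ⟨fun h => ⟨act_counit h, act_mul h⟩, fun h => ⟨?_, h.1⟩⟩
  ext x
  refine ext_slice fun g => ext_slice fun f => ?_
  have h1 := congrArg (fun φ => φ x) (h.2 f g)
  simp only [LinearMap.comp_apply, slice_rTensor, LinearEquiv.coe_coe]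
  change act M f (act M g x) = _
  refine h1.trans ?_
  change slice k M.X (conv f g) (M.ρ x) = _
  generalize M.ρ x = w
  induction w with
  | zero => simp
  | add a b ha hb => simp only [map_add, ha, hb]
  | tmul y c =>
    simp only [LinearMap.lTensor_tmul, slice_tmul, conv, LinearMap.comp_apply]
    generalize (Coalgebra.comul (R := k) c) = d
    induction d with
    | zero => simp
    | add a b ha hb => simp only [map_add, tmul_add, ← ha, ← hb, add_smul]
    | tmul a b => simp [smul_smul, mul_comm]

lemma isHom_iff (M N : Comod k H) (φ : M.X →ₗ[k] N.X) :
    IsHom M N φ ↔ ∀ f x, φ (act M f x) = act N f (φ x) := by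
  constructor
  · intro h f x
    have := congrArg (fun ψ => slice k N.X f (ψ x)) h
    simp only [LinearMap.comp_apply, slice_rTensor] at this
    exact this.symm
  · intro h
    ext x
    refine ext_slice fun f => ?_
    simp only [LinearMap.comp_apply, slice_rTensor]
    exact (h f x).symm

lemma isSubcomodule_iff (M : Comod k H) (N : Submodule k M.X) :
    M.IsSubcomodule N ↔ ∀ f, ∀ x ∈ N, act M f x ∈ N :=
  ⟨fun h f x hx => slice_mem N _ (h x hx) f, fun h x hx => mem_range_rTensor N _ fun f => h f x hx⟩

/-- free algebra on the functionals -/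
abbrev RR (k : Type) [Field k] (H : Type) [Ring H] [HopfAlgebra k H] : Type :=
  FreeAlgebra k (Module.Dual k H)

noncomputable def actHom (M : Comod k H) : RR k H →ₐ[k] Module.End k M.X :=
  FreeAlgebra.lift k (act M)

noncomputable instance instModuleRR (M : Comod k H) : Module (RR k H) M.X :=
  Module.compHom M.X (actHom M).toRingHom

lemma RR_smul_def (M : Comod k H) (r : RR k H) (x : M.X) : r • x = actHom M r x := rfl

lemma RR_ι_smul (M : Comod k H) (f : Module.Dual k H) (x : M.X) :
    (FreeAlgebra.ι k f : RR k H) • x = act M f x := by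
  rw [RR_smul_def, actHom, FreeAlgebra.lift_ι_apply]

instance (M : Comod k H) : IsScalarTower k (RR k H) M.X where
  smul_assoc c r x := by simp [RR_smul_def]

instance (M : Comod k H) : SMulCommClass k (RR k H) M.X where
  smul_comm c r x := by simp [RR_smul_def]

lemma RR_exists (r : RR k H) : ∃ f : Module.Dual k H, ∀ M : Comod k H, M.IsComodule →
    actHom M r = act M f := by
  induction r using FreeAlgebra.induction with
  | grade0 c =>
    refine ⟨c • Coalgebra.counit, fun M hM => ?_⟩
    have : act M (c • (Coalgebra.counit (R := k) (A := H))) =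
      c • act M (Coalgebra.counit (R := k) (A := H)) := by
      ext x; simp [act, slice, LinearMap.lTensor_smul]
    rw [this, act_counit hM, AlgHom.commutes, Algebra.algebraMap_eq_smul_one]
  | grade1 f => exact ⟨f, fun M _ => by rw [actHom, FreeAlgebra.lift_ι_apply]⟩
  | mul a b ha hb =>
    obtain ⟨f, hf⟩ := ha
    obtain ⟨g, hg⟩ := hb
    exact ⟨conv f g, fun M hM => by rw [map_mul, hf M hM, hg M hM, act_mul hM]⟩
  | add a b ha hb =>
    obtain ⟨f, hf⟩ := ha
    obtain ⟨g, hg⟩ := hb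
    refine ⟨f + g, fun M hM => ?_⟩
    rw [map_add, hf M hM, hg M hM]
    ext x; simp [act, slice, LinearMap.lTensor_add]

/-- subcomodules as `RR`-submodules -/
def toRR (M : Comod k H) (N : Submodule k M.X) (hM : M.IsComodule) (hN : M.IsSubcomodule N) :
    Submodule (RR k H) M.X where
  carrier := N
  add_mem' := N.add_mem
  zero_mem' := N.zero_mem
  smul_mem' r x hx := by
    obtain ⟨f, hf⟩ := RR_exists r
    rw [RR_smul_def, hf M hM]
    exact (isSubcomodule_iff M N).1 hN f x hx

lemma ofRR (M : Comod k H) (N : Submodule (RR k H) M.X) :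
    M.IsSubcomodule (N.restrictScalars k) := by
  rw [isSubcomodule_iff]
  intro f x hx
  rw [← RR_ι_smul]
  exact N.smul_mem _ hx

lemma IsSimple.isSimpleModule {M : Comod k H} (hM : M.IsSimple) : IsSimpleModule (RR k H) M.X := by
  obtain ⟨_, hn, _, h⟩ := hM
  rw [isSimpleModule_iff]
  refine { exists_pair_ne := ⟨⊥, ⊤, ?_⟩, eq_bot_or_eq_top := fun N => ?_ }
  · exact bot_ne_top
  · rcases h _ (ofRR M N) with h | h
    · left
      exact (Submodule.restrictScalars_eq_bot_iff k _ _).1 h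
    · right
      exact (Submodule.restrictScalars_eq_top_iff k _ _).1 h

end general
end Comod

open TensorProduct
namespace Comod

section general2
variable {k : Type} [Field k] {H : Type} [Ring H] [HopfAlgebra k H]

@[reducible] noncomputable def unitR (k : Type) [Field k] (H : Type) [Ring H] [HopfAlgebra k H] :
    Comod k H where
  X := k
  ρ := (TensorProduct.mk k k H).flip 1

@[reducible] noncomputable def regularR (k : Type) [Field k] (H : Type) [Ring H]
    [HopfAlgebra k H] : Comod k H where
  X := H
  ρ := Coalgebra.comul

@[reducible] noncomputable def tensorR (M N : Comod k H) : Comod k H where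
  X := M.X ⊗[k] N.X
  ρ := (LinearMap.mul' k H).lTensor (M.X ⊗[k] N.X)
        ∘ₗ (TensorProduct.tensorTensorTensorComm k M.X H N.X H).toLinearMap
        ∘ₗ TensorProduct.map M.ρ N.ρ

@[reducible] noncomputable def dsumR (M N : Comod k H) : Comod k H where
  X := M.X × N.X
  ρ := (LinearMap.inl k M.X N.X).rTensor H ∘ₗ M.ρ ∘ₗ LinearMap.fst k M.X N.X
     + (LinearMap.inr k M.X N.X).rTensor H ∘ₗ N.ρ ∘ₗ LinearMap.snd k M.X N.X

/-- matrix coefficients -/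
noncomputable def coef (M : Comod k H) : Module.Dual k M.X →ₗ[k] M.X →ₗ[k] H :=
  LinearMap.mk₂ k (fun ξ x => TensorProduct.lid k H (ξ.rTensor H (M.ρ x)))
    (by intros; simp [LinearMap.rTensor_add]) (by intros; simp [LinearMap.rTensor_smul])
    (by intros; simp) (by intros; simp)

lemma coef_apply (M : Comod k H) (ξ : Module.Dual k M.X) (x : M.X) :
    coef M ξ x = TensorProduct.lid k H (ξ.rTensor H (M.ρ x)) := rfl

lemma apply_coef (M : Comod k H) (f : Module.Dual k H) (ξ : Module.Dual k M.X) (x : M.X) :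
    f (coef M ξ x) = ξ (act M f x) := by
  rw [coef_apply, act, LinearMap.comp_apply]
  generalize M.ρ x = w
  induction w with
  | zero => simp
  | add a b ha hb => simp only [map_add, ha, hb]
  | tmul y c => simp [mul_comm]

/-- coefficient space -/
noncomputable def C (M : Comod k H) : Submodule k H := Submodule.map₂ (coef M) ⊤ ⊤

lemma coef_mem (M : Comod k H) (ξ : Module.Dual k M.X) (x : M.X) : coef M ξ x ∈ C M :=
  Submodule.apply_mem_map₂ _ trivial trivial

lemma C_le {M : Comod k H} {P : Submodule k H} : C M ≤ P ↔ ∀ ξ x, coef M ξ x ∈ P := by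
  rw [C, Submodule.map₂_le]; simp

lemma C_eq_range (M : Comod k H) : C M = LinearMap.range (TensorProduct.lift (coef M)) := by
  apply le_antisymm
  · rw [C_le]
    intro ξ x
    exact ⟨ξ ⊗ₜ x, by simp⟩
  · rintro _ ⟨w, rfl⟩
    induction w with
    | zero => simp
    | add a b ha hb => rw [map_add]; exact add_mem ha hb
    | tmul y c => exact coef_mem M _ _

lemma finrank_C_le (M : Comod k H) [FiniteDimensional k M.X] :
    Module.finrank k (C M) ≤ Module.finrank k M.X ^ 2 := by
  rw [C_eq_range]
  refine (LinearMap.finrank_range_le _).trans ?_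
  rw [Module.finrank_tensorProduct, Subspace.dual_finrank_eq, sq]

lemma finite_C (M : Comod k H) [FiniteDimensional k M.X] : FiniteDimensional k (C M) := by
  rw [C_eq_range]; infer_instance

lemma C_iso_le {M N : Comod k H} (h : Iso M N) : C M ≤ C N := by
  obtain ⟨e, he⟩ := h
  rw [C_le]
  intro ξ x
  have h1 : coef M ξ x = coef N (ξ ∘ₗ e.symm.toLinearMap) (e x) := by
    have h2 := congrArg (fun φ => φ x) he
    simp only [LinearMap.comp_apply, LinearEquiv.coe_coe] at h2
    rw [coef_apply, coef_apply, h2]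
    generalize M.ρ x = w
    induction w with
    | zero => simp
    | add a b ha hb => simp only [map_add, ha, hb]
    | tmul y c => simp
  rw [h1]; exact coef_mem _ _ _

lemma Iso.symm {M N : Comod k H} (h : Iso M N) : Iso N M := by
  obtain ⟨e, he⟩ := h
  refine ⟨e.symm, ?_⟩
  rw [isHom_iff] at he ⊢
  intro f x
  apply e.injective
  have := he f (e.symm x)
  simp only [LinearEquiv.coe_coe, LinearEquiv.apply_symm_apply] at this ⊢
  exact this.symm

lemma C_iso {M N : Comod k H} (h : Iso M N) : C M = C N :=
  le_antisymm (C_iso_le h) (C_iso_le h.symm)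

lemma C_dsumR (M N : Comod k H) : C (M.dsumR N) = C M ⊔ C N := by
  have key : ∀ (ξ : Module.Dual k (M.X × N.X)) (x : M.X) (y : N.X),
      coef (M.dsumR N) ξ (x, y) = coef M (ξ ∘ₗ LinearMap.inl k _ _) x +
        coef N (ξ ∘ₗ LinearMap.inr k _ _) y := by
    intro ξ x y
    simp only [coef_apply, LinearMap.rTensor_comp, LinearMap.comp_apply, ← map_add]
    rfl
  apply le_antisymm
  · rw [C_le]
    rintro ξ ⟨x, y⟩
    rw [key]
    exact Submodule.add_mem_sup (coef_mem _ _ _) (coef_mem _ _ _)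
  · apply sup_le
    · rw [C_le]
      intro ξ x
      have h := key (ξ ∘ₗ LinearMap.fst k _ _) x 0
      rw [map_zero, add_zero, LinearMap.comp_assoc, LinearMap.fst_comp_inl, LinearMap.comp_id] at h
      rw [← h]; exact coef_mem _ _ _
    · rw [C_le]
      intro ξ x
      have h := key (ξ ∘ₗ LinearMap.snd k _ _) 0 x
      rw [map_zero, zero_add, LinearMap.comp_assoc, LinearMap.snd_comp_inr, LinearMap.comp_id] at h
      rw [← h]; exact coef_mem _ _ _

lemma rho_eq (M : Comod k H) {κ : Type} [Fintype κ] (b : Module.Basis κ k M.X) (x : M.X) :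
    M.ρ x = ∑ i, b i ⊗ₜ coef M (b.coord i) x := by
  refine ext_slice fun f => ?_
  rw [map_sum]
  simp only [slice_tmul, apply_coef]
  exact (b.sum_repr _).symm

lemma rho_tensor (M N : Comod k H) {κ κ' : Type} [Fintype κ] [Fintype κ']
    (b : Module.Basis κ k M.X) (b' : Module.Basis κ' k N.X) (x : M.X) (y : N.X) :
    (M.tensorR N).ρ (x ⊗ₜ[k] y) = ∑ i, ∑ j, (b i ⊗ₜ[k] b' j) ⊗ₜ[k]
      (coef M (b.coord i) x * coef N (b'.coord j) y) := by
  change (LinearMap.mul' k H).lTensor (M.X ⊗[k] N.X)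
    (TensorProduct.tensorTensorTensorComm k M.X H N.X H (TensorProduct.map M.ρ N.ρ (x ⊗ₜ y))) = _
  rw [TensorProduct.map_tmul, rho_eq M b, rho_eq N b', TensorProduct.sum_tmul]
  simp only [TensorProduct.tmul_sum, map_sum, TensorProduct.tensorTensorTensorComm_tmul,
    LinearMap.lTensor_tmul, LinearMap.mul'_apply]

lemma C_tensorR (M N : Comod k H) [FiniteDimensional k M.X] [FiniteDimensional k N.X] :
    C (M.tensorR N) = C M * C N := by
  set b := Module.finBasis k M.X
  set b' := Module.finBasis k N.X
  have key : ∀ (ζ : Module.Dual k (M.X ⊗[k] N.X)) (x : M.X) (y : N.X),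
      coef (M.tensorR N) ζ (x ⊗ₜ[k] y) = ∑ i, ∑ j, ζ (b i ⊗ₜ[k] b' j) •
        (coef M (b.coord i) x * coef N (b'.coord j) y) := by
    intro ζ x y
    rw [coef_apply, rho_tensor M N b b' x y]
    simp only [map_sum]
    refine Finset.sum_congr rfl fun i _ => Finset.sum_congr rfl fun j _ => ?_
    exact (congrArg _ (LinearMap.rTensor_tmul _ _ _ _)).trans (TensorProduct.lid_tmul _ _)
  apply le_antisymm
  · rw [C_le]
    intro ζ w
    change M.X ⊗[k] N.X at w
    induction w with
    | zero => exact (map_zero (coef (M.tensorR N) ζ)) ▸ zero_mem _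
    | add a b ha hb =>
      exact (map_add (coef (M.tensorR N) ζ) a b) ▸ add_mem ha hb
    | tmul x y =>
      rw [key]
      exact sum_mem fun i _ => sum_mem fun j _ => Submodule.smul_mem _ _
        (Submodule.mul_mem_mul (coef_mem _ _ _) (coef_mem _ _ _))
  · rw [C, C, Submodule.mul_le]
    have : ∀ (ξ : Module.Dual k M.X) (x : M.X) (η : Module.Dual k N.X) (y : N.X),
        coef M ξ x * coef N η y ∈ C (M.tensorR N) := by
      intro ξ x η y
      have h := key (LinearMap.mul' k k ∘ₗ TensorProduct.map ξ η) x y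
      have h2 : coef M ξ x * coef N η y = coef (M.tensorR N)
          (LinearMap.mul' k k ∘ₗ TensorProduct.map ξ η) (x ⊗ₜ[k] y) := by
        rw [h]
        have e1 : ξ = ∑ i, ξ (b i) • b.coord i := by
          refine b.ext fun j => ?_
          simp
        have e2 : η = ∑ i, η (b' i) • b'.coord i := by
          refine b'.ext fun j => ?_
          simp
        conv_lhs => rw [e1, e2]
        simp only [map_sum, map_smul, LinearMap.sum_apply, LinearMap.smul_apply,
          Finset.sum_mul_sum, smul_mul_smul_comm]
        simp
      rw [h2]
      exact coef_mem _ _ _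
    intro a ha c hc
    have h1 : ∀ ξ x, ∀ c ∈ C N, coef M ξ x * c ∈ C (M.tensorR N) := by
      intro ξ x
      have : C N ≤ (C (M.tensorR N)).comap (LinearMap.mulLeft k (coef M ξ x)) := by
        rw [C_le]; intro η y; exact this ξ x η y
      exact fun c hc => this hc
    have h2 : C M ≤ (C (M.tensorR N)).comap (LinearMap.mulRight k c) := by
      rw [C_le]; intro ξ x; exact h1 ξ x c hc
    exact h2 ha

lemma C_unitR : C (Comod.unitR k H) = 1 := by
  have key : ∀ (ξ : Module.Dual k k) (x : k), coef (Comod.unitR k H) ξ x = ξ x • (1 : H) := by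
    intro ξ x
    exact (congrArg _ (LinearMap.rTensor_tmul _ _ _ _)).trans (TensorProduct.lid_tmul _ _)
  apply le_antisymm
  · rw [C_le]
    intro ξ x
    rw [key]
    exact Submodule.smul_mem _ _ (Submodule.one_le.1 le_rfl)
  · rw [Submodule.one_le]
    have := key LinearMap.id 1
    simp only [LinearMap.id_coe, id_eq, one_smul] at this
    rw [← this]; exact coef_mem _ _ _

lemma isComodule_regularR : (Comod.regularR k H).IsComodule := by
  constructor
  · ext x
    exact (Coalgebra.coassoc_symm_apply (R := k) x).symm
  · ext x
    change TensorProduct.rid k H (Coalgebra.counit.lTensor H (Coalgebra.comul x)) = x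
    rw [Coalgebra.lTensor_counit_comul]; simp

/-- subcomodule as a comodule -/
@[reducible] noncomputable def sub (M : Comod k H) (N : Submodule k M.X) (hN : M.IsSubcomodule N) :
    Comod k H where
  X := N
  ρ := (LinearEquiv.ofInjective (N.subtype.rTensor H)
      (Module.Flat.rTensor_preserves_injective_linearMap _ N.injective_subtype)).symm.toLinearMap ∘ₗ
    (M.ρ ∘ₗ N.subtype).codRestrict _ (fun x => hN x x.2)

lemma sub_rho (M : Comod k H) (N : Submodule k M.X) (hN : M.IsSubcomodule N) (x : N) :
    N.subtype.rTensor H ((sub M N hN).ρ x) = M.ρ x := by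
  change (LinearEquiv.ofInjective (N.subtype.rTensor H)
      (Module.Flat.rTensor_preserves_injective_linearMap _ N.injective_subtype)
      ((LinearEquiv.ofInjective (N.subtype.rTensor H)
      (Module.Flat.rTensor_preserves_injective_linearMap _ N.injective_subtype)).symm
      ((M.ρ ∘ₗ N.subtype).codRestrict _ (fun x => hN x x.2) x))).1 = _
  rw [LinearEquiv.apply_symm_apply]; rfl

lemma sub_act (M : Comod k H) (N : Submodule k M.X) (hN : M.IsSubcomodule N) (f) (x : N) :
    N.subtype (act (sub M N hN) f x) = act M f (N.subtype x) := by
  have := slice_rTensor f N.subtype ((sub M N hN).ρ x)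
  rw [sub_rho] at this
  exact this.symm

lemma sub_isComodule (M : Comod k H) (hM : M.IsComodule) (N : Submodule k M.X)
    (hN : M.IsSubcomodule N) : (sub M N hN).IsComodule := by
  rw [isComodule_iff] at hM ⊢
  constructor
  · refine LinearMap.ext fun (x : N) => N.injective_subtype ?_
    rw [sub_act, hM.1]; rfl
  · intro f g
    refine LinearMap.ext fun (x : N) => N.injective_subtype ?_
    rw [sub_act, ← hM.2, Module.End.mul_apply, Module.End.mul_apply]
    rw [← sub_act M N hN g]
    exact sub_act M N hN f _

lemma mem_C_sub (N : Submodule k H) (hN : (Comod.regularR k H).IsSubcomodule N) :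
    N ≤ C (sub (Comod.regularR k H) N hN) := by
  intro x hx
  have : coef (sub (Comod.regularR k H) N hN)
    ((Coalgebra.counit (R := k) (A := H)) ∘ₗ N.subtype) (⟨x, hx⟩ : N) = x := by
    rw [coef_apply, LinearMap.rTensor_comp]
    have h := sub_rho (Comod.regularR k H) N hN ⟨x, hx⟩
    refine (congrArg (fun w => TensorProduct.lid k H
      (LinearMap.rTensor H (Coalgebra.counit (R := k) (A := H)) w)) h).trans ?_
    change TensorProduct.lid k H (Coalgebra.counit.rTensor H (Coalgebra.comul x)) = x
    rw [Coalgebra.rTensor_counit_comul]; simp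
  rw [← this]
  exact coef_mem _ _ _

lemma act_finite (M : Comod k H) (x : M.X) :
    ∃ P : Submodule k M.X, FiniteDimensional k P ∧ ∀ f, act M f x ∈ P := by
  obtain ⟨s, hs⟩ := exists_repr (M.ρ x)
  refine ⟨Submodule.span k ((fun i => slice k M.X ((Module.Basis.ofVectorSpace k H).coord i)
    (M.ρ x)) '' (s : Set _)), FiniteDimensional.span_of_finite k ((s.finite_toSet).image _), ?_⟩
  intro f
  have hf := congrArg (slice k M.X f) hs
  rw [map_sum] at hf
  rw [act, LinearMap.comp_apply, hf]
  refine sum_mem fun i hi => ?_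
  rw [slice_tmul]
  refine Submodule.smul_mem _ _ (Submodule.subset_span ⟨i, hi, ?_⟩)
  rfl

lemma sub_isSimple (M : Comod k H) (hM : M.IsComodule) (N : Submodule (RR k H) M.X)
    (hN : IsSimpleModule (RR k H) N) :
    (sub M (N.restrictScalars k) (ofRR M N)).IsSimple := by
  have hA : IsAtom N := isSimpleModule_iff_isAtom.1 hN
  obtain ⟨x, hx, hx0⟩ := Submodule.exists_mem_ne_zero_of_ne_bot hA.1
  refine ⟨sub_isComodule M hM _ _, ⟨(⟨x, hx⟩ : N), (0 : N), fun h => hx0 (congrArg Subtype.val h)⟩,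
    ?_, ?_⟩
  · obtain ⟨P, hP, hP'⟩ := act_finite M x
    have : N.restrictScalars k ≤ P := by
      intro y hy
      have h1 : Submodule.span (RR k H) {x} = N := by
        refine (hA.le_iff.1 ?_).resolve_left ?_
        · rw [Submodule.span_le]; simpa using hx
        · simpa using hx0
      have hy' : y ∈ Submodule.span (RR k H) {x} := by rw [h1]; exact hy
      obtain ⟨r, rfl⟩ := Submodule.mem_span_singleton.1 hy'
      obtain ⟨f, hf⟩ := RR_exists r
      rw [RR_smul_def, hf M hM]
      exact hP' f
    exact Submodule.finiteDimensional_of_le this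
  · intro Q hQ
    change Submodule k (N.restrictScalars k) at Q
    have h1 : M.IsSubcomodule (Q.map (N.restrictScalars k).subtype) := by
      rw [isSubcomodule_iff] at hQ ⊢
      rintro f _ ⟨y, hy, rfl⟩
      refine ⟨_, hQ f y hy, ?_⟩
      exact sub_act M (N.restrictScalars k) (ofRR M N) f y
    have h2 : toRR M _ hM h1 ≤ N := by
      rintro _ ⟨y, hy, rfl⟩
      exact y.2
    rcases hA.le_iff.1 h2 with h | h
    · left
      refine (Submodule.eq_bot_iff _).2 fun y hy => ?_
      have : (y : M.X) ∈ toRR M _ hM h1 := ⟨y, hy, rfl⟩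
      rw [h] at this
      exact Subtype.ext this
    · right
      refine (Submodule.eq_top_iff').2 fun y => ?_
      have : (y : M.X) ∈ toRR M _ hM h1 := by rw [h]; exact y.2
      obtain ⟨z, hz, hzy⟩ := this
      rwa [← Subtype.ext hzy]

lemma isComodule_regular : (Comod.regular k H).IsComodule := isComodule_regularR

theorem peter_weyl (hcss : IsCosemisimple k H) (P : Submodule k H)
    (hP : ∀ M : Comod k H, M.IsSimple → C M ≤ P) : P = ⊤ := by
  have hss : IsSemisimpleModule (RR k H) (Comod.regular k H).X := by
    rw [isSemisimpleModule_iff]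
    constructor
    intro N
    obtain ⟨N', hN', hc⟩ := hcss _ isComodule_regular _ (ofRR _ N)
    refine ⟨toRR _ N' isComodule_regular hN', ?_⟩
    rw [isCompl_iff, disjoint_iff, codisjoint_iff] at hc ⊢
    constructor
    · refine (Submodule.eq_bot_iff _).2 fun y hy => ?_
      have : y ∈ N.restrictScalars k ⊓ N' := hy
      rw [hc.1] at this
      exact this
    · refine (Submodule.eq_top_iff').2 fun y => ?_
      have : y ∈ N.restrictScalars k ⊔ N' := by rw [hc.2]; trivial
      obtain ⟨a, ha, b, hb, rfl⟩ := Submodule.mem_sup.1 this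
      exact Submodule.add_mem_sup ha hb
  have h := IsSemisimpleModule.sSup_simples_eq_top (RR k H) (Comod.regular k H).X
  rw [Submodule.eq_top_iff']
  intro y
  have hy : (y : (Comod.regular k H).X) ∈
      sSup {m : Submodule (RR k H) (Comod.regular k H).X | IsSimpleModule (RR k H) m} := by
    rw [h]; trivial
  rw [sSup_eq_iSup'] at hy
  refine Submodule.iSup_induction (motive := fun z : (Comod.regular k H).X => (z : H) ∈ P)
    _ hy ?_ P.zero_mem (fun a b ha hb => P.add_mem ha hb)
  rintro ⟨N, hN⟩ z hz
  exact hP _ (sub_isSimple _ isComodule_regular N hN) (mem_C_sub _ (ofRR _ N) hz)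

lemma C_dsum (M N : Comod k H) : C (M.dsum N) = C M ⊔ C N := C_dsumR M N

lemma C_tensor (M N : Comod k H) [FiniteDimensional k M.X] [FiniteDimensional k N.X] :
    C (M.tensor N) = C M * C N := C_tensorR M N

lemma C_unit : C (Comod.unit k H) = 1 := C_unitR

end general2
end Comod

open TensorProduct
namespace Comod

section complexcase
variable {H : Type} [Ring H] [HopfAlgebra ℂ H]

lemma schur {M : Comod ℂ H} (hM : M.IsSimple) (φ : M.X →ₗ[RR ℂ H] M.X) :
    ∃ c : ℂ, ∀ x, φ x = c • x := by
  have hs := hM.isSimpleModule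
  obtain ⟨_, hn, hf, _⟩ := hM
  obtain ⟨c, hc⟩ := Module.End.exists_eigenvalue (φ.restrictScalars ℂ : Module.End ℂ M.X)
  obtain ⟨v, hv⟩ := hc.exists_hasEigenvector
  let P : Submodule (RR ℂ H) M.X :=
    { carrier := {x | φ x = c • x}
      add_mem' := by intro a b ha hb; simp only [Set.mem_setOf_eq] at *; rw [map_add, ha, hb, smul_add]
      zero_mem' := by simp
      smul_mem' := by
        intro r x hx
        simp only [Set.mem_setOf_eq] at *
        rw [map_smul, hx, smul_comm] }
  have hP : P = ⊤ := by
    refine (eq_bot_or_eq_top P).resolve_left fun h => ?_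
    have hv1 : v ∈ P := hv.apply_eq_smul
    rw [h] at hv1
    exact hv.2 hv1
  refine ⟨c, fun x => ?_⟩
  have : x ∈ P := by rw [hP]; trivial
  exact this

lemma schur_ne {M N : Comod ℂ H} (hM : M.IsSimple) (hN : N.IsSimple) (h : ¬ Iso M N)
    (φ : M.X →ₗ[RR ℂ H] N.X) : φ = 0 := by
  have h1 := hM.isSimpleModule
  have h2 := hN.isSimpleModule
  refine φ.bijective_or_eq_zero.resolve_left fun hb => h ?_
  refine ⟨LinearEquiv.ofBijective (φ.restrictScalars ℂ) hb, ?_⟩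
  rw [isHom_iff]
  intro f x
  change φ (act M f x) = act N f (φ x)
  rw [← RR_ι_smul, ← RR_ι_smul, map_smul]

theorem density {ι : Type} [Fintype ι] (T : ι → Comod ℂ H)
    (hs : ∀ i, (T i).IsSimple) (hd : ∀ i j, Iso (T i) (T j) → i = j)
    (t : ∀ i, Module.End ℂ (T i).X) : ∃ f, ∀ i, act (T i) f = t i := by
  classical
  have h1 : ∀ i, IsSimpleModule (RR ℂ H) (T i).X := fun i => (hs i).isSimpleModule
  have hfd : ∀ i, FiniteDimensional ℂ (T i).X := fun i => (hs i).2.2.1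
  have key : ∀ φ : Module.End (RR ℂ H) (∀ i, (T i).X), ∃ c : ι → ℂ, ∀ x i, φ x i = c i • x i := by
    intro φ
    have : ∀ i, ∃ c : ℂ, ∀ x : (T i).X, φ (Pi.single i x) i = c • x := fun i =>
      schur (hs i) (LinearMap.proj i ∘ₗ φ ∘ₗ LinearMap.single (RR ℂ H) (fun j => (T j).X) i)
    choose c hc using this
    refine ⟨c, fun x i => ?_⟩
    conv_lhs => rw [← Finset.univ_sum_single x]
    rw [map_sum, Finset.sum_apply, Finset.sum_eq_single i]
    · exact hc i (x i)
    · intro j _ hj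
      have := schur_ne (hs j) (hs i) (fun h => hj (hd _ _ h))
        (LinearMap.proj i ∘ₗ φ ∘ₗ LinearMap.single (RR ℂ H) (fun j => (T j).X) j)
      exact congrArg (fun ψ => ψ (x j)) this
    · simp
  let F : Module.End (Module.End (RR ℂ H) (∀ i, (T i).X)) (∀ i, (T i).X) :=
    { toFun := fun x i => t i (x i)
      map_add' := by intro x y; ext i; simp
      map_smul' := by
        intro φ x
        obtain ⟨c, hc⟩ := key φ
        ext i
        simp only [Module.End.smul_def, RingHom.id_apply, hc, map_smul] }
  let b := fun i => Module.finBasis ℂ (T i).X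
  obtain ⟨r, hr⟩ := jacobson_density F
    (Finset.univ.image (fun p : Σ i, Fin (Module.finrank ℂ (T i).X) =>
      (Pi.single p.1 (b p.1 p.2) : ∀ i, (T i).X)))
  obtain ⟨f, hf⟩ := RR_exists r
  refine ⟨f, fun i => ?_⟩
  refine (b i).ext fun j => ?_
  have h2 := hr (Pi.single i (b i j)) (Finset.mem_image.2 ⟨⟨i, j⟩, Finset.mem_univ _, rfl⟩)
  have h3 := congrFun h2 i
  have h4 : F (Pi.single i (b i j)) i = t i (b i j) := by
    change t i ((Pi.single i (b i j) : ∀ i, (T i).X) i) = _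
    rw [Pi.single_eq_same]
  rw [h4, Pi.smul_apply, Pi.single_eq_same, RR_smul_def, hf _ (hs i).1] at h3
  exact h3.symm

theorem density_finset {ι : Type} (s : Finset ι) (T : ι → Comod ℂ H)
    (hs : ∀ i, (T i).IsSimple) (hd : ∀ i j, Iso (T i) (T j) → i = j)
    (t : ∀ i, Module.End ℂ (T i).X) : ∃ f, ∀ i ∈ s, act (T i) f = t i := by
  obtain ⟨f, hf⟩ := density (fun i : s => T i) (fun i => hs i)
    (fun i j h => Subtype.ext (hd _ _ h)) (fun i => t i)
  exact ⟨f, fun i hi => hf ⟨i, hi⟩⟩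

theorem mem_of_C_le {ι : Type} (T : ι → Comod ℂ H)
    (hs : ∀ i, (T i).IsSimple) (hd : ∀ i j, Iso (T i) (T j) → i = j)
    (s : Finset ι) (i : ι) (h : C (T i) ≤ ⨆ j ∈ s, C (T j)) : i ∈ s := by
  classical
  by_contra hi
  obtain ⟨f, hf⟩ := density_finset (insert i s) T hs hd (fun j => if j = i then 1 else 0)
  have h1 : ⨆ j ∈ s, C (T j) ≤ LinearMap.ker f := by
    refine iSup₂_le fun j hj => ?_
    rw [C_le]
    intro ξ x
    have hji : j ≠ i := fun e => hi (e ▸ hj)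
    rw [LinearMap.mem_ker, apply_coef, hf j (Finset.mem_insert_of_mem hj), if_neg hji]
    simp
  have h2 := h.trans h1
  obtain ⟨x, hx⟩ := @exists_ne _ (hs i).2.1 (0 : (T i).X)
  refine hx ((Module.forall_dual_apply_eq_zero_iff ℂ x).1 fun ξ => ?_)
  have h3 : f (coef (T i) ξ x) = 0 := h2 (coef_mem _ _ _)
  rw [apply_coef, hf i (Finset.mem_insert_self _ _), if_pos rfl] at h3
  exact h3

theorem linInd {ι : Type} (T : ι → Comod ℂ H)
    (hs : ∀ i, (T i).IsSimple) (hd : ∀ i j, Iso (T i) (T j) → i = j)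
    (κ : ι → Type) (b : ∀ i, Module.Basis (κ i) ℂ (T i).X) :
    LinearIndependent ℂ (fun p : Σ i, κ i × κ i =>
      coef (T p.1) ((b p.1).coord p.2.1) (b p.1 p.2.2)) := by
  classical
  rw [linearIndependent_iff']
  rintro s g hg ⟨i, a, c⟩ hp
  obtain ⟨f, hf⟩ := density_finset (s.image Sigma.fst) T hs hd
    (Pi.single i ((b i).constr ℂ (Pi.single c (b i a))))
  have h := congrArg f hg
  rw [map_sum, map_zero, Finset.sum_eq_single ⟨i, a, c⟩] at h
  · rw [map_smul, apply_coef, hf i (Finset.mem_image.2 ⟨_, hp, rfl⟩)] at h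
    simpa using h
  · rintro ⟨i', a', c'⟩ hp' hne
    rw [map_smul, apply_coef, hf i' (Finset.mem_image.2 ⟨_, hp', rfl⟩)]
    by_cases hi : i' = i
    · subst hi
      simp only [Pi.single_eq_same, Module.Basis.constr_basis]
      by_cases hc : c' = c
      · subst hc
        have : a ≠ a' := by rintro rfl; exact hne rfl
        simp [this]
      · simp [Pi.single_eq_of_ne hc]
    · simp [Pi.single_eq_of_ne hi]
  · intro h; exact absurd hp h

/-- twist of a comodule by a group-like element -/
@[reducible] noncomputable def twist (M : Comod ℂ H) (g : H) : Comod ℂ H where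
  X := M.X
  ρ := (LinearMap.mulLeft ℂ g).lTensor M.X ∘ₗ M.ρ

lemma twist_act (M : Comod ℂ H) (g : H) (f : Module.Dual ℂ H) :
    act (twist M g) f = act M (f ∘ₗ LinearMap.mulLeft ℂ g) := by
  refine LinearMap.ext fun (x : M.X) => ?_
  change slice ℂ M.X f ((LinearMap.mulLeft ℂ g).lTensor M.X (M.ρ x)) =
    slice ℂ M.X (f ∘ₗ LinearMap.mulLeft ℂ g) (M.ρ x)
  generalize M.ρ x = w
  induction w with
  | zero => simp
  | add a b ha hb => simp only [map_add, ha, hb]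
  | tmul y c => simp

lemma twist_simple {M : Comod ℂ H} (hM : M.IsSimple) (g g' : H) (hg : g' * g = 1)
    (hg' : g * g' = 1)
    (h1 : Coalgebra.comul (R := ℂ) g = g ⊗ₜ g) (h2 : Coalgebra.counit (R := ℂ) g = 1) :
    (twist M g).IsSimple := by
  obtain ⟨hc, hn, hf, hs⟩ := hM
  rw [isComodule_iff] at hc
  refine ⟨?_, hn, hf, ?_⟩
  · rw [isComodule_iff]
    constructor
    · rw [twist_act]
      have : (Coalgebra.counit (R := ℂ) (A := H)) ∘ₗ LinearMap.mulLeft ℂ g =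
        Coalgebra.counit := by
        ext x; simp [h2]
      rw [this]; exact hc.1
    · intro f f'
      rw [twist_act, twist_act, twist_act]
      refine (hc.2 _ _).trans ?_
      congr 1
      ext x
      simp only [conv, LinearMap.comp_apply, LinearMap.mulLeft_apply, Bialgebra.comul_mul, h1]
      generalize (Coalgebra.comul (R := ℂ) x) = d
      induction d with
      | zero => simp
      | add a b ha hb => simp only [map_add, mul_add, ha, hb]
      | tmul a b => simp
  · intro N hN
    refine hs N ?_
    rw [isSubcomodule_iff] at hN ⊢
    intro f x hx
    have := hN (f ∘ₗ LinearMap.mulLeft ℂ g') x hx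
    rw [twist_act] at this
    convert this using 3
    ext y
    simp [← mul_assoc, hg]

lemma twist_coef (M : Comod ℂ H) (g : H) (ξ : Module.Dual ℂ M.X) (x : M.X) :
    coef (twist M g) ξ x = g * coef M ξ x := by
  change TensorProduct.lid ℂ H (ξ.rTensor H ((LinearMap.mulLeft ℂ g).lTensor M.X (M.ρ x))) =
    g * TensorProduct.lid ℂ H (ξ.rTensor H (M.ρ x))
  generalize M.ρ x = w
  induction w with
  | zero => simp
  | add a b ha hb => simp only [map_add, mul_add, ha, hb]
  | tmul y c => simp

lemma twist_C (M : Comod ℂ H) (g : H) : C (twist M g) = Submodule.span ℂ {g} * C M := by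
  apply le_antisymm
  · rw [C_le]
    intro ξ x
    rw [twist_coef]
    exact Submodule.mul_mem_mul (Submodule.mem_span_singleton_self g) (coef_mem _ _ _)
  · have h1 : C M ≤ (C (twist M g)).comap (LinearMap.mulLeft ℂ g) := by
      rw [C_le]; intro ξ x
      rw [Submodule.mem_comap, LinearMap.mulLeft_apply, ← twist_coef]
      exact coef_mem _ _ _
    rw [Submodule.mul_le]
    intro a ha c hc
    obtain ⟨z, rfl⟩ := Submodule.mem_span_singleton.1 ha
    rw [smul_mul_assoc]
    exact Submodule.smul_mem _ _ (h1 hc)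

/-- one-dimensional comodules give group-like elements. -/
lemma grouplike {M : Comod ℂ H} (hM : M.IsComodule) (h1 : Module.finrank ℂ M.X = 1) :
    ∃ g : H, Coalgebra.comul (R := ℂ) g = g ⊗ₜ g ∧ Coalgebra.counit (R := ℂ) g = 1 ∧
      C M = Submodule.span ℂ {g} := by
  have hfd : FiniteDimensional ℂ M.X := Module.finite_of_finrank_eq_succ h1
  have b : Module.Basis (Fin 1) ℂ M.X := (Module.finBasis ℂ M.X).reindex (finCongr h1)
  set g := coef M (b.coord 0) (b 0) with hg
  have hρ : M.ρ (b 0) = b 0 ⊗ₜ g := by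
    rw [rho_eq M b]; simp [hg]
  refine ⟨g, ?_, ?_, ?_⟩
  · have h := congrArg (fun φ => φ (b 0)) hM.1
    simp only [LinearMap.comp_apply, hρ, LinearMap.rTensor_tmul, LinearMap.lTensor_tmul,
      LinearEquiv.coe_coe] at h
    have h2 := congrArg (fun w => TensorProduct.lid ℂ _ ((b.coord 0).rTensor (H ⊗[ℂ] H)
      (TensorProduct.assoc ℂ M.X H H w))) h
    simp at h2
    exact h2.symm
  · have h := congrArg (fun φ => b.coord 0 (φ (b 0))) hM.2
    simpa [hρ] using h
  · apply le_antisymm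
    · rw [C_le]
      intro ξ x
      have e1 : ξ = ξ (b 0) • b.coord 0 := by
        refine b.ext fun j => ?_
        fin_cases j; simp
      have e2 : x = b.coord 0 x • b 0 := by
        conv_lhs => rw [← b.sum_repr x]
        simp
      rw [e1, e2, map_smul, map_smul, LinearMap.smul_apply]
      exact Submodule.smul_mem _ _ (Submodule.smul_mem _ _ (Submodule.mem_span_singleton_self _))
    · rw [Submodule.span_singleton_le_iff_mem]
      exact coef_mem _ _ _

end complexcase
end Comod


namespace GKaux

open Module

variable {B : Type} [Ring B] [Algebra ℂ B]

theorem finrank_sup_le {ι : Type} (s : Finset ι) (f : ι → Submodule ℂ B)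
    (hf : ∀ i, FiniteDimensional ℂ (f i)) :
    FiniteDimensional ℂ (s.sup f : Submodule ℂ B) ∧
    finrank ℂ (s.sup f : Submodule ℂ B) ≤ ∑ i ∈ s, finrank ℂ (f i) := by
  classical
  induction s using Finset.induction_on with
  | empty =>
    rw [Finset.sup_empty]
    exact ⟨inferInstance, by simp⟩
  | insert a s ha ih =>
    obtain ⟨h1, h2⟩ := ih
    haveI := hf a
    rw [Finset.sup_insert, Finset.sum_insert ha]
    refine ⟨inferInstance, ?_⟩
    exact (Submodule.finrank_add_le_finrank_add_finrank _ _).trans (by omega)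

structure Sys (B : Type) [Ring B] [Algebra ℂ B] (Cs : ℕ → ℤ → Submodule ℂ B) : Prop where
  hU0 : ∀ m, Cs 1 0 * Cs 0 m = Cs 1 m
  hU : ∀ n m, Cs 1 0 * Cs (n + 1) m = Cs (n + 2) m ⊔ Cs n (m + 1)
  hG : ∀ m m', Cs 0 m * Cs 0 m' = Cs 0 (m + m')
  hG0 : Cs 0 0 = 1
  hcomm : Cs 0 1 * Cs 1 0 = Cs 1 0 * Cs 0 1
  hfd : ∀ n m, FiniteDimensional ℂ (Cs n m)
  hrk : ∀ n m, finrank ℂ (Cs n m) ≤ (n + 1) ^ 2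
  hind : ∀ N : ℕ, ∃ v : Fin N × Fin N × Fin N × Fin N → B, LinearIndependent ℂ v ∧
    ∀ p, v p ∈ Cs (N + p.1) ((p.2.1 : ℕ) : ℤ)
  htop : ∀ P : Submodule ℂ B, (∀ n m, Cs n m ≤ P) → P = ⊤

variable {Cs : ℕ → ℤ → Submodule ℂ B}

def W (Cs : ℕ → ℤ → Submodule ℂ B) : Submodule ℂ B := 1 ⊔ Cs 1 0 ⊔ Cs 0 1 ⊔ Cs 0 (-1)

theorem one_le_W : 1 ≤ W Cs := le_sup_left.trans (le_sup_left.trans le_sup_left)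
theorem U_le_W : Cs 1 0 ≤ W Cs := le_sup_right.trans (le_sup_left.trans le_sup_left)
theorem G_le_W : Cs 0 1 ≤ W Cs := le_sup_right.trans le_sup_left
theorem G'_le_W : Cs 0 (-1) ≤ W Cs := le_sup_right

theorem W_mono {a b : ℕ} (h : a ≤ b) : W Cs ^ a ≤ W Cs ^ b := pow_right_mono₀ one_le_W h

theorem Sys.W_fd (h : Sys B Cs) : FiniteDimensional ℂ (W Cs) := by
  haveI := h.hfd 1 0
  haveI := h.hfd 0 1
  haveI := h.hfd 0 (-1)
  haveI : FiniteDimensional ℂ (1 : Submodule ℂ B) := h.hG0 ▸ h.hfd 0 0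
  unfold W
  infer_instance

theorem Sys.comm' (h : Sys B Cs) : Cs 0 (-1) * Cs 1 0 = Cs 1 0 * Cs 0 (-1) := by
  have e1 : Cs 0 1 * Cs 0 (-1) = 1 := by rw [h.hG, ← h.hG0]; rfl
  have e2 : Cs 0 (-1) * Cs 0 1 = 1 := by rw [h.hG, ← h.hG0]; rfl
  calc Cs 0 (-1) * Cs 1 0 = Cs 0 (-1) * (Cs 1 0 * (Cs 0 1 * Cs 0 (-1))) := by rw [e1, mul_one]
    _ = Cs 0 (-1) * (Cs 1 0 * Cs 0 1) * Cs 0 (-1) := by simp only [mul_assoc]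
    _ = (Cs 0 (-1) * Cs 0 1) * Cs 1 0 * Cs 0 (-1) := by rw [← h.hcomm]; simp only [mul_assoc]
    _ = _ := by rw [e2, one_mul]

def T (Cs : ℕ → ℤ → Submodule ℂ B) (K : ℕ) : Submodule ℂ B :=
  ⨆ p : {p : ℕ × ℤ // p.1 ≤ K ∧ |p.2| ≤ K}, Cs 1 0 ^ p.1.1 * Cs 0 p.1.2

def Z (Cs : ℕ → ℤ → Submodule ℂ B) (N K : ℕ) : Submodule ℂ B :=
  ⨆ p : {p : ℕ × ℤ // p.1 ≤ N ∧ |p.2| ≤ K}, Cs p.1.1 p.1.2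

theorem le_T {K a : ℕ} {j : ℤ} (ha : a ≤ K) (hj : |j| ≤ K) : Cs 1 0 ^ a * Cs 0 j ≤ T Cs K :=
  le_iSup (fun p : {p : ℕ × ℤ // p.1 ≤ K ∧ |p.2| ≤ K} => Cs 1 0 ^ p.1.1 * Cs 0 p.1.2)
    ⟨(a, j), ha, hj⟩

theorem le_Z {N K a : ℕ} {j : ℤ} (ha : a ≤ N) (hj : |j| ≤ K) : Cs a j ≤ Z Cs N K :=
  le_iSup (fun p : {p : ℕ × ℤ // p.1 ≤ N ∧ |p.2| ≤ K} => Cs p.1.1 p.1.2)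
    ⟨(a, j), ha, hj⟩

theorem Z_mono {N K N' K' : ℕ} (h1 : N ≤ N') (h2 : K ≤ K') : Z Cs N K ≤ Z Cs N' K' :=
  iSup_le fun p => le_Z (p.2.1.trans h1) (p.2.2.trans (by exact_mod_cast h2))

theorem Sys.W_le_T (h : Sys B Cs) (K : ℕ) : W Cs ^ K ≤ T Cs K := by
  induction K with
  | zero =>
    have := le_T (Cs := Cs) (K := 0) (a := 0) (j := 0) le_rfl (by simp)
    rwa [pow_zero, one_mul, h.hG0] at this
  | succ K ih =>
    rw [pow_succ']
    refine (mul_le_mul_right ih _).trans ?_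
    unfold T
    rw [Submodule.mul_iSup]
    refine iSup_le fun ⟨⟨a, j⟩, ha, hj⟩ => ?_
    simp only at ha hj ⊢
    change _ ≤ T Cs (K + 1)
    have c1 : Cs 0 1 * (Cs 1 0) ^ a = (Cs 1 0) ^ a * Cs 0 1 :=
      (show Commute (Cs 0 1) (Cs 1 0) from h.hcomm).pow_right a
    have c2 : Cs 0 (-1) * (Cs 1 0) ^ a = (Cs 1 0) ^ a * Cs 0 (-1) :=
      (show Commute (Cs 0 (-1)) (Cs 1 0) from h.comm').pow_right a
    rw [abs_le] at hj
    unfold W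
    rw [Submodule.sup_mul, Submodule.sup_mul, Submodule.sup_mul, one_mul]
    refine sup_le (sup_le (sup_le ?_ ?_) ?_) ?_
    · exact le_T (by omega) (by rw [abs_le]; push_cast; omega)
    · rw [← mul_assoc, ← pow_succ']
      exact le_T (by omega) (by rw [abs_le]; push_cast; omega)
    · rw [← mul_assoc, c1, mul_assoc, h.hG]
      exact le_T (by omega) (by rw [abs_le]; push_cast; omega)
    · rw [← mul_assoc, c2, mul_assoc, h.hG]
      exact le_T (by omega) (by rw [abs_le]; push_cast; omega)

theorem Sys.U_Z (h : Sys B Cs) (N K : ℕ) : Cs 1 0 * Z Cs N K ≤ Z Cs (N + 1) (K + 1) := by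
  unfold Z
  rw [Submodule.mul_iSup]
  refine iSup_le fun ⟨⟨a, j⟩, ha, hj⟩ => ?_
  simp only at ha hj ⊢
  change _ ≤ Z Cs (N + 1) (K + 1)
  rw [abs_le] at hj
  rcases a with _ | a
  · rw [h.hU0]
    exact le_Z (by omega) (by rw [abs_le]; push_cast; omega)
  · rw [h.hU]
    exact sup_le (le_Z (by omega) (by rw [abs_le]; push_cast; omega))
      (le_Z (by omega) (by rw [abs_le]; push_cast; omega))

theorem Sys.UG_Z (h : Sys B Cs) (a K : ℕ) (j : ℤ) (hj : |j| ≤ K) :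
    Cs 1 0 ^ a * Cs 0 j ≤ Z Cs a (a + K) := by
  induction a with
  | zero => rw [pow_zero, one_mul]; exact le_Z le_rfl (by simpa using hj)
  | succ a ih =>
    rw [pow_succ', mul_assoc]
    refine (mul_le_mul_right ih _).trans ((h.U_Z _ _).trans (Z_mono le_rfl (by omega)))

theorem Sys.W_le_Z (h : Sys B Cs) (K : ℕ) : W Cs ^ K ≤ Z Cs K (2 * K) := by
  refine (h.W_le_T K).trans (iSup_le fun ⟨⟨a, j⟩, ha, hj⟩ => ?_)
  exact (h.UG_Z a K j hj).trans (Z_mono ha (by simp only at ha; omega))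

theorem Sys.Z_rank (h : Sys B Cs) (N K : ℕ) : FiniteDimensional ℂ (Z Cs N K) ∧
    finrank ℂ (Z Cs N K) ≤ (N + 1) ^ 3 * (2 * K + 1) := by
  let s : Finset (ℕ × ℤ) := Finset.range (N + 1) ×ˢ Finset.Icc (-(K : ℤ)) K
  obtain ⟨h1, h2⟩ := finrank_sup_le s (fun p => Cs p.1 p.2) (fun p => h.hfd _ _)
  have hle : Z Cs N K ≤ s.sup (fun p => Cs p.1 p.2) := by
    refine iSup_le fun ⟨⟨a, j⟩, ha, hj⟩ => ?_
    rw [abs_le] at hj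
    exact Finset.le_sup (f := fun p : ℕ × ℤ => Cs p.1 p.2) (b := (a, j))
      (by simp [s]; simp only at ha hj; omega)
  haveI := h1
  refine ⟨Submodule.finiteDimensional_of_le hle, (Submodule.finrank_mono hle).trans (h2.trans ?_)⟩
  calc ∑ i ∈ s, finrank ℂ (Cs i.1 i.2) ≤ ∑ i ∈ s, (N + 1) ^ 2 := by
        refine Finset.sum_le_sum fun i hi => (h.hrk _ _).trans ?_
        have : i.1 < N + 1 := by simp [s] at hi; omega
        gcongr; omega
    _ = _ := by
        have : (Finset.Icc (-(K : ℤ)) K).card = 2 * K + 1 := by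
          rw [Int.card_Icc]; omega
        simp only [s, Finset.sum_const, Finset.card_product, Finset.card_range, this, smul_eq_mul]
        ring

theorem Sys.Gpow_le (h : Sys B Cs) (m : ℤ) : Cs 0 m ≤ W Cs ^ m.natAbs := by
  have p : ∀ k : ℕ, Cs 0 k ≤ W Cs ^ k := by
    intro k
    induction k with
    | zero => simp [h.hG0]
    | succ k ih =>
      rw [pow_succ, Nat.cast_succ, ← h.hG]
      exact mul_le_mul' ih G_le_W
  have n : ∀ k : ℕ, Cs 0 (-(k : ℤ)) ≤ W Cs ^ k := by
    intro k
    induction k with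
    | zero => simp [h.hG0]
    | succ k ih =>
      rw [pow_succ, Nat.cast_succ, neg_add, ← h.hG]
      exact mul_le_mul' ih G'_le_W
  rcases Int.natAbs_eq m with hm | hm
  · have := p m.natAbs; rwa [← hm] at this
  · have := n m.natAbs; rwa [← hm] at this

theorem Sys.Cs_le (h : Sys B Cs) (n : ℕ) (m : ℤ) : Cs n m ≤ W Cs ^ (n + m.natAbs) := by
  have : Cs n m ≤ Cs 1 0 ^ n * Cs 0 m := by
    rcases n with _ | n
    · simp
    · induction n with
      | zero => rw [zero_add, pow_one, h.hU0]
      | succ n ih =>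
        rw [pow_succ', mul_assoc]
        refine le_trans ?_ (mul_le_mul_right ih _)
        rw [h.hU]
        exact le_sup_left
  rw [pow_add]
  exact this.trans (mul_le_mul' (pow_le_pow_left' U_le_W n) (h.Gpow_le m))

theorem Sys.exists_le (h : Sys B Cs) (V : Submodule ℂ B) [FiniteDimensional ℂ V] :
    ∃ k : ℕ, V ≤ W Cs ^ k := by
  have hm : Monotone fun k : ℕ => W Cs ^ k := fun a b hab => W_mono hab
  have htop : (⨆ k : ℕ, W Cs ^ k) = ⊤ := h.htop _ fun n m => (h.Cs_le n m).trans
    (le_iSup (fun k : ℕ => W Cs ^ k) _)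
  have hfg : V.FG := Module.Finite.iff_fg.mp inferInstance
  obtain ⟨s, rfl⟩ := hfg
  clear * - hm htop
  classical
  induction s using Finset.induction_on with
  | empty => exact ⟨0, by simp⟩
  | insert a s ha ih =>
    obtain ⟨k, hk⟩ := ih
    have : a ∈ ⨆ k : ℕ, W Cs ^ k := htop ▸ Submodule.mem_top
    rw [Submodule.mem_iSup_of_directed _ hm.directed_le] at this
    obtain ⟨l, hl⟩ := this
    refine ⟨max k l, ?_⟩
    rw [Submodule.span_le]
    intro x hx
    rw [Finset.mem_coe, Finset.mem_insert] at hx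
    rcases hx with rfl | hx
    · exact hm (le_max_right k l) hl
    · exact hm (le_max_left k l) (hk (Submodule.subset_span hx))

theorem Sys.upper (h : Sys B Cs) (V : Submodule ℂ B) [FiniteDimensional ℂ V] :
    ∃ c : ℕ, 0 < c ∧ ∀ n : ℕ, 0 < n → finrank ℂ (V ^ n : Submodule ℂ B) ≤ c * n ^ 4 := by
  obtain ⟨k, hk⟩ := h.exists_le V
  refine ⟨(k + 1) ^ 3 * (4 * k + 1), by positivity, fun n hn => ?_⟩
  have hle : V ^ n ≤ Z Cs (k * n) (2 * (k * n)) :=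
    ((pow_le_pow_left' hk n).trans (by rw [← pow_mul])).trans (h.W_le_Z _)
  obtain ⟨h1, h2⟩ := h.Z_rank (k * n) (2 * (k * n))
  refine (Submodule.finrank_mono hle).trans (h2.trans ?_)
  calc (k * n + 1) ^ 3 * (2 * (2 * (k * n)) + 1) ≤ ((k + 1) * n) ^ 3 * ((4 * k + 1) * n) := by
        gcongr <;> nlinarith
    _ = _ := by ring

theorem Sys.lower (h : Sys B Cs) (N : ℕ) :
    N ^ 4 ≤ finrank ℂ (W Cs ^ (3 * N) : Submodule ℂ B) := by
  obtain ⟨v, hv, hm⟩ := h.hind N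
  have hmem : ∀ p, v p ∈ W Cs ^ (3 * N) := fun p =>
    W_mono (by have := p.1.2; have := p.2.1.2; simp; omega) (h.Cs_le _ _ (hm p))
  haveI : FiniteDimensional ℂ (W Cs ^ (3 * N) : Submodule ℂ B) := by
    haveI := (h.Z_rank (3 * N) (2 * (3 * N))).1
    exact Submodule.finiteDimensional_of_le (h.W_le_Z _)
  have : LinearIndependent ℂ (fun p => (⟨v p, hmem p⟩ : (W Cs ^ (3 * N) : Submodule ℂ B))) :=
    LinearIndependent.of_comp (Submodule.subtype _) hv
  have := this.fintype_card_le_finrank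
  simp at this
  calc N ^ 4 = N * (N * (N * N)) := by ring
    _ ≤ _ := this

open Filter Topology in
theorem Sys.gk (h : Sys B Cs) : GKdim ℂ B = 4 := by
  have hlog : Tendsto (fun n : ℕ => Real.log n) atTop atTop :=
    Real.tendsto_log_atTop.comp tendsto_natCast_atTop_atTop
  apply le_antisymm
  · refine iSup_le fun V => iSup_le fun hV => ?_
    obtain ⟨c, hc, hb⟩ := h.upper V
    have ht : Tendsto (fun n : ℕ => Real.log c / Real.log n + 4) atTop (𝓝 (0 + 4)) :=
      (hlog.const_div_atTop _).add_const 4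
    have ht2 := (ENNReal.continuous_ofReal.tendsto _).comp ht
    have e4 : ENNReal.ofReal (0 + 4) = 4 := by norm_num
    rw [e4] at ht2
    rw [← ht2.limsup_eq]
    refine limsup_le_limsup ?_
    filter_upwards [eventually_ge_atTop 2] with n hn
    apply ENNReal.ofReal_le_ofReal
    have hn0 : (0 : ℝ) < Real.log n := Real.log_pos (by exact_mod_cast hn)
    rw [div_le_iff₀ hn0, add_mul, div_mul_cancel₀ _ hn0.ne']
    have hcp : (0 : ℝ) < c := by exact_mod_cast hc
    have hnp : (0 : ℝ) < n := by positivity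
    have e : Real.log c + 4 * Real.log n = Real.log (c * n ^ 4) := by
      rw [Real.log_mul (by positivity) (by positivity), Real.log_pow]; norm_num
    rw [e]
    rcases Nat.eq_zero_or_pos (finrank ℂ (V ^ n : Submodule ℂ B)) with h0 | h0
    · rw [h0]
      simp only [Nat.cast_zero, Real.log_zero]
      apply Real.log_nonneg
      have : 1 ≤ c * n ^ 4 := Nat.succ_le_of_lt (by positivity)
      exact_mod_cast this
    · apply Real.log_le_log (by exact_mod_cast h0)
      exact_mod_cast hb n (by omega)
  · refine le_trans ?_ (le_iSup₂ (f := fun (V : Submodule ℂ B) (_ : FiniteDimensional ℂ V) => 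
      limsup (fun n : ℕ => ENNReal.ofReal
        (Real.log (Module.finrank ℂ ↥(V ^ n)) / Real.log n)) atTop) (W Cs) h.W_fd)
    have h3 : Tendsto (fun N : ℕ => 3 * N) atTop atTop :=
      tendsto_id.const_mul_atTop' (by norm_num)
    refine le_trans ?_ (limsup_le_limsup_of_le h3)
    rw [← limsup_comp]
    have hlog3 := hlog.comp h3
    have ht : Tendsto (fun N : ℕ => 4 - 4 * Real.log 3 / Real.log ((3 * N : ℕ) : ℝ)) atTop
        (𝓝 (4 - 0)) :=
      tendsto_const_nhds.sub (hlog3.const_div_atTop _)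
    have ht2 := (ENNReal.continuous_ofReal.tendsto _).comp ht
    have e4 : ENNReal.ofReal (4 - 0) = 4 := by norm_num
    rw [e4] at ht2
    rw [← ht2.limsup_eq]
    refine limsup_le_limsup ?_
    filter_upwards [eventually_ge_atTop 2] with n hn
    apply ENNReal.ofReal_le_ofReal
    have hnp : (0 : ℝ) < n := by positivity
    have hn0 : (0 : ℝ) < Real.log ((3 * n : ℕ) : ℝ) := Real.log_pos (by norm_cast; omega)
    rw [le_div_iff₀ hn0, sub_mul, div_mul_cancel₀ _ hn0.ne']
    have e : 4 * Real.log ((3 * n : ℕ) : ℝ) - 4 * Real.log 3 = Real.log ((n ^ 4 : ℕ) : ℝ) := by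
      push_cast
      rw [Real.log_mul (by positivity) (by positivity), Real.log_pow]; push_cast; ring
    rw [e]
    apply Real.log_le_log (by positivity)
    exact_mod_cast h.lower n

end GKaux

/-- Example 3.10 of the paper, case `d = 2`.  Let
`E, F ∈ GL_2(ℂ)` satisfy `FᵀEᵀEF = λ·I` for some `λ ∈ ℂ^×`, and suppose the
solutions `q` of `q² − λ^{-1/2} tr(EᵀE⁻¹) q + 1 = 0` are generic (`q = ±1` or
not a root of unity).  Let `B = G(E,F)` be Mrozinski's quantum group: a
finitely generated cosemisimple Hopf algebra whose measured comodule theory is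
that of `O_q(GL(2))` — its simple comodules are `S_{n,m}` (`n ∈ ℕ`, `m ∈ ℤ`,
every simple comodule isomorphic to exactly one of them) with
`dim S_{n,m} = n + 1` (in particular the fundamental comodule `S_{1,0}` is
`2`-dimensional), `S_{0,0} = 𝟏`, `S_{0,m} ⊗ S_{0,m'} ≅ S_{0,m+m'}`,
`S_{1,0} ⊗ S_{0,m} ≅ S_{1,m}`, and
`S_{1,0} ⊗ S_{n+1,m} ≅ S_{n+2,m} ⊕ S_{n,m+1}`.
Then `GKdim G(E,F) = dim GL(2) = 4`. -/
theorem stmt13 (E F : Matrix (Fin 2) (Fin 2) ℂ) (hE : IsUnit E) (hF : IsUnit F)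
    (l : ℂ) (hl : l ≠ 0)
    (hEF : F.transpose * E.transpose * E * F = l • (1 : Matrix (Fin 2) (Fin 2) ℂ))
    (q : ℂ)
    (hq : ∃ μ : ℂ, μ ^ 2 * l = 1 ∧
      q ^ 2 - μ * (E.transpose * E⁻¹).trace * q + 1 = 0)
    (hgen : q = 1 ∨ q = -1 ∨ ∀ n : ℕ, 0 < n → q ^ n ≠ 1)
    (B : Type) [Ring B] [HopfAlgebra ℂ B]
    (hfg : Algebra.FiniteType ℂ B) (hcss : IsCosemisimple ℂ B)
    (S : ℕ → ℤ → Comod ℂ B)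
    (hsimple : ∀ n m, (S n m).IsSimple)
    (hcomplete : ∀ M : Comod ℂ B, M.IsSimple → ∃ n m, Comod.Iso M (S n m))
    (hdistinct : ∀ n m n' m', Comod.Iso (S n m) (S n' m') → n = n' ∧ m = m')
    (hunit : Comod.Iso (S 0 0) (Comod.unit ℂ B))
    (hdim : ∀ n m, Module.finrank ℂ (S n m).X = n + 1)
    (hdet : ∀ m m', Comod.Iso ((S 0 m).tensor (S 0 m')) (S 0 (m + m')))
    (hfus0 : ∀ m, Comod.Iso ((S 1 0).tensor (S 0 m)) (S 1 m))
    (hfus : ∀ n m, Comod.Iso ((S 1 0).tensor (S (n + 1) m))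
        ((S (n + 2) m).dsum (S n (m + 1)))) :
    GKdim ℂ B = 4 := by
  classical
  have hfd : ∀ n m, FiniteDimensional ℂ (S n m).X := fun n m => (hsimple n m).2.2.1
  have hU0 : ∀ m, Comod.C (S 1 0) * Comod.C (S 0 m) = Comod.C (S 1 m) := by
    intro m
    have := hfd 1 0
    have := hfd 0 m
    rw [← Comod.C_tensor]
    exact Comod.C_iso (hfus0 m)
  have hU : ∀ n m, Comod.C (S 1 0) * Comod.C (S (n + 1) m) =
      Comod.C (S (n + 2) m) ⊔ Comod.C (S n (m + 1)) := by
    intro n m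
    have := hfd 1 0
    have := hfd (n + 1) m
    rw [← Comod.C_tensor, ← Comod.C_dsum]
    exact Comod.C_iso (hfus n m)
  have hG : ∀ m m', Comod.C (S 0 m) * Comod.C (S 0 m') = Comod.C (S 0 (m + m')) := by
    intro m m'
    have := hfd 0 m
    have := hfd 0 m'
    rw [← Comod.C_tensor]
    exact Comod.C_iso (hdet m m')
  have hG0 : Comod.C (S 0 0) = 1 := by
    rw [Comod.C_iso hunit, Comod.C_unit]
  let T : ℕ × ℤ → Comod ℂ B := fun i => S i.1 i.2
  have hTs : ∀ i, (T i).IsSimple := fun i => hsimple _ _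
  have hTd : ∀ i j, Comod.Iso (T i) (T j) → i = j := fun i j hij =>
    Prod.ext (hdistinct _ _ _ _ hij).1 (hdistinct _ _ _ _ hij).2
  have hcomm : Comod.C (S 0 1) * Comod.C (S 1 0) = Comod.C (S 1 0) * Comod.C (S 0 1) := by
    obtain ⟨g, hg1, hg2, hg3⟩ := Comod.grouplike (hsimple 0 1).1 (hdim 0 1)
    obtain ⟨g', hg1', hg2', hg3'⟩ := Comod.grouplike (hsimple 0 (-1)).1 (hdim 0 (-1))
    have key : ∀ a b : B, Coalgebra.counit (R := ℂ) a = 1 → Coalgebra.counit (R := ℂ) b = 1 →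
        a * b ∈ (1 : Submodule ℂ B) → a * b = 1 := by
      intro a b ha hb hab
      obtain ⟨c, hc⟩ := Submodule.mem_one.mp hab
      have h1 : Coalgebra.counit (R := ℂ) (a * b) = 1 := by
        rw [Bialgebra.counit_mul, ha, hb, one_mul]
      rw [← hc, Bialgebra.counit_algebraMap] at h1
      rw [← hc, h1, map_one]
    have e1 : g * g' = 1 := key _ _ hg2 hg2' (by
      have := Submodule.mul_mem_mul (Submodule.mem_span_singleton_self (R := ℂ) g)
        (Submodule.mem_span_singleton_self (R := ℂ) g')
      rw [← hg3, ← hg3', hG, show (1 + -1 : ℤ) = 0 by norm_num, hG0] at this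
      exact this)
    have e2 : g' * g = 1 := key _ _ hg2' hg2 (by
      have := Submodule.mul_mem_mul (Submodule.mem_span_singleton_self (R := ℂ) g')
        (Submodule.mem_span_singleton_self (R := ℂ) g)
      rw [← hg3, ← hg3', hG, show (-1 + 1 : ℤ) = 0 by norm_num, hG0] at this
      exact this)
    obtain ⟨n, m, hiso⟩ := hcomplete _ (Comod.twist_simple (hsimple 1 0) g g' e2 e1 hg1 hg2)
    have hn : n = 1 := by
      obtain ⟨e, -⟩ := hiso
      have h1 := e.finrank_eq
      rw [hdim n m] at h1
      have h2 : Module.finrank ℂ (Comod.twist (S 1 0) g).X = 2 := hdim 1 0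
      omega
    subst hn
    have hC : Comod.C (S 0 1) * Comod.C (S 1 0) = Comod.C (S 1 m) := by
      rw [← Comod.C_iso hiso, Comod.twist_C, hg3]
    have hle : Comod.C (S 1 m) ≤ Comod.C (S 3 0) ⊔ Comod.C (S 1 1) := by
      have hUU : Comod.C (S 1 0) * Comod.C (S 1 0) = Comod.C (S 2 0) ⊔ Comod.C (S 0 1) := hU 0 0
      have hU2 : Comod.C (S 1 0) * Comod.C (S 2 0) = Comod.C (S 3 0) ⊔ Comod.C (S 1 1) := hU 1 0
      rw [← hC]
      calc Comod.C (S 0 1) * Comod.C (S 1 0)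
          ≤ (Comod.C (S 1 0) * Comod.C (S 1 0)) * Comod.C (S 1 0) := by
            refine mul_le_mul_left ?_ _
            rw [hUU]
            exact le_sup_right
        _ = Comod.C (S 3 0) ⊔ Comod.C (S 1 1) ⊔ Comod.C (S 1 1) := by
            rw [mul_assoc, hUU, Submodule.mul_sup, hU2, hU0]
        _ = _ := by rw [sup_assoc, sup_idem]
    have hmem := Comod.mem_of_C_le T hTs hTd {(3, 0), (1, 1)} (1, m) (by
      refine hle.trans (sup_le ?_ ?_)
      · exact le_iSup₂_of_le (f := fun j (_ : j ∈ ({(3, 0), (1, 1)} : Finset (ℕ × ℤ))) =>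
          Comod.C (T j)) (3, 0) (by simp) le_rfl
      · exact le_iSup₂_of_le (f := fun j (_ : j ∈ ({(3, 0), (1, 1)} : Finset (ℕ × ℤ))) =>
          Comod.C (T j)) (1, 1) (by simp) le_rfl)
    have hm : m = 1 := by simpa using hmem
    rw [hC, hm, hU0]
  refine GKaux.Sys.gk (Cs := fun n m => Comod.C (S n m))
    { hU0 := hU0
      hU := hU
      hG := hG
      hG0 := hG0
      hcomm := hcomm
      hfd := fun n m => by have := hfd n m; exact Comod.finite_C _
      hrk := fun n m => by
        have := hfd n m
        exact (Comod.finrank_C_le _).trans_eq (by rw [hdim])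
      hind := ?_
      htop := fun P hP => Comod.peter_weyl hcss P fun M hM => by
        obtain ⟨n, m, hi⟩ := hcomplete M hM
        rw [Comod.C_iso hi]
        exact hP n m }
  intro N
  have b : ∀ i : ℕ × ℤ, Module.Basis (Fin (i.1 + 1)) ℂ (T i).X := fun i =>
    haveI := hfd i.1 i.2
    Module.finBasisOfFinrankEq ℂ (T i).X (hdim i.1 i.2)
  have hli := Comod.linInd T hTs hTd (fun i => Fin (i.1 + 1)) b
  let φ : Fin N × Fin N × Fin N × Fin N → Σ i : ℕ × ℤ, Fin (i.1 + 1) × Fin (i.1 + 1) := fun p =>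
    ⟨(N + p.1, ((p.2.1 : ℕ) : ℤ)),
      (⟨p.2.2.1, by have := p.2.2.1.2; simp only; omega⟩,
       ⟨p.2.2.2, by have := p.2.2.2.2; simp only; omega⟩)⟩
  have hφ : Function.Injective φ := by
    rintro ⟨a, b, c, d⟩ ⟨a', b', c', d'⟩ h
    have h1 : N + (a : ℕ) = N + a' := congrArg (fun x => x.1.1) h
    have h2 : ((b : ℕ) : ℤ) = ((b' : ℕ) : ℤ) := congrArg (fun x => x.1.2) h
    have h3 : (c : ℕ) = c' := congrArg (fun x => (x.2.1 : ℕ)) h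
    have h4 : (d : ℕ) = d' := congrArg (fun x => (x.2.2 : ℕ)) h
    simp only [Prod.mk.injEq, Fin.ext_iff]
    omega
  exact ⟨_, hli.comp φ hφ, fun p => Comod.coef_mem _ _ _⟩
end

section
/- Let H be a cosemisimple Hopf algebra over an algebraically closed field and let V = ⊕_{α∈F} C_α be a direct sum of simple subcoalgebras of H (F a finite index set). Then for every n ≥ 1 the H-comodules V^{⊗n} (with comodule structure obtained from Δ^{⊗n} followed by multiplication in the last tensor factors) and V^n ⊆ H (with comodule structure given by comultiplication) have the same support: C(V^{⊗n}) = V^n. -/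
/-!
Background definitions: comodules over a Hopf algebra, simple comodules, direct
summands, supports, subcoalgebras, cosemisimplicity, Gelfand-Kirillov dimension,
and (measured) Grothendieck semirings of cosemisimple Hopf algebras.
-/

open TensorProduct

namespace Stmt15Aux

variable {k : Type} [Field k] {H : Type} [Ring H] [HopfAlgebra k H]

/-- The slice map `f ⊗ id : X ⊗ W → W` of a functional `f`. -/
noncomputable def slice {X : Type} [AddCommGroup X] [Module k X] {W : Type} [AddCommGroup W]
    [Module k W] (f : X →ₗ[k] k) : X ⊗[k] W →ₗ[k] W :=
  (TensorProduct.lid k W).toLinearMap ∘ₗ f.rTensor W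

@[simp] lemma slice_tmul {X : Type} [AddCommGroup X] [Module k X] {W : Type} [AddCommGroup W]
    [Module k W] (f : X →ₗ[k] k) (x : X) (w : W) : slice f (x ⊗ₜ[k] w) = f x • w := by
  simp [slice]

lemma eq_zero_of_slice {X : Type} [AddCommGroup X] [Module k X] {W : Type} [AddCommGroup W]
    [Module k W] (t : X ⊗[k] W) (h : ∀ f : X →ₗ[k] k, slice f t = 0) : t = 0 := by
  classical
  let b := Module.Basis.ofVectorSpace k X
  apply (TensorProduct.equivFinsuppOfBasisLeft (N := W) b).injective
  rw [map_zero]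
  ext i
  have : ∀ s : X ⊗[k] W, TensorProduct.equivFinsuppOfBasisLeft (N := W) b s i
      = slice (b.coord i) s := by
    intro s
    induction s with
    | zero => simp
    | tmul x y => simp
    | add x y hx hy => simp [hx, hy]
  rw [this, h]; rfl

lemma mem_range_iff {X : Type} [AddCommGroup X] [Module k X] {W : Type} [AddCommGroup W]
    [Module k W] (C : Submodule k W) (t : X ⊗[k] W) :
    t ∈ LinearMap.range (C.subtype.lTensor X) ↔ ∀ f : X →ₗ[k] k, slice f t ∈ C := by
  constructor
  · rintro ⟨s, rfl⟩ f
    induction s with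
    | zero => simp
    | tmul x y => simpa using C.smul_mem _ y.2
    | add x y hx hy => simpa using C.add_mem hx hy
  · intro h
    have hex : Function.Exact (C.subtype.lTensor X) (C.mkQ.lTensor X) :=
      lTensor_exact X (LinearMap.exact_subtype_mkQ C) (Submodule.mkQ_surjective C)
    refine (hex t).1 (eq_zero_of_slice _ fun f => ?_)
    have : ∀ s : X ⊗[k] W, slice f (C.mkQ.lTensor X s) = C.mkQ (slice f s) := by
      intro s
      induction s with
      | zero => simp
      | tmul x y => simp
      | add x y hx hy => simp only [map_add, hx, hy]
    rw [this]
    simpa using h f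

lemma support_tensor (M N : Comod k H) (C D : Submodule k H)
    (hM : M.IsSupport C) (hN : N.IsSupport D) : (M.tensor N).IsSupport (C * D) := by
  let T : (M.X ⊗[k] H) ⊗[k] (N.X ⊗[k] H) →ₗ[k] (M.X ⊗[k] N.X) ⊗[k] H :=
    (LinearMap.mul' k H).lTensor (M.X ⊗[k] N.X)
        ∘ₗ (TensorProduct.tensorTensorTensorComm k M.X H N.X H).toLinearMap
  have hρ : ∀ m n, (M.tensor N).ρ (m ⊗ₜ[k] n : M.X ⊗[k] N.X) = T (M.ρ m ⊗ₜ N.ρ n) := by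
    intro m n; rfl
  constructor
  · intro x
    change M.X ⊗[k] N.X at x
    change (M.tensor N).ρ x ∈ LinearMap.range ((C * D).subtype.lTensor (M.X ⊗[k] N.X))
    induction x with
    | zero => 
      have : (M.tensor N).ρ (0 : M.X ⊗[k] N.X) = 0 := map_zero (M.tensor N).ρ
      rw [this]; exact Submodule.zero_mem _
    | add x y hx hy =>
      have : (M.tensor N).ρ (x + y : M.X ⊗[k] N.X) = (M.tensor N).ρ x + (M.tensor N).ρ y :=
        map_add (M.tensor N).ρ x y
      rw [this]; exact Submodule.add_mem _ hx hy
    | tmul m n =>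
      rw [hρ]
      obtain ⟨a, ha⟩ := hM.1 m
      obtain ⟨b, hb⟩ := hN.1 n
      rw [← ha, ← hb]
      clear ha hb
      induction a with
      | zero => simp; exact Submodule.zero_mem _
      | add x y hx hy =>
        rw [map_add, TensorProduct.add_tmul, map_add]; exact Submodule.add_mem _ hx hy
      | tmul x c =>
        induction b with
        | zero => simp; exact Submodule.zero_mem _
        | add x y hx hy =>
          rw [map_add, TensorProduct.tmul_add, map_add]; exact Submodule.add_mem _ hx hy
        | tmul y d =>
          exact ⟨(x ⊗ₜ y) ⊗ₜ ⟨c.1 * d.1, Submodule.mul_mem_mul c.2 d.2⟩, by simp [T]⟩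
  · intro C' hC'
    have span_le : ∀ (P : Comod k H) (E : Submodule k H), P.IsSupport E →
        E ≤ Submodule.span k {h | ∃ (f : P.X →ₗ[k] k) (x : P.X), h = slice f (P.ρ x)} := by
      intro P E hP
      exact hP.2 _ fun x => (mem_range_iff _ _).2 fun f => Submodule.subset_span ⟨f, x, rfl⟩
    refine (mul_le_mul' (span_le M C hM) (span_le N D hN)).trans ?_
    rw [Submodule.span_mul_span, Submodule.span_le]
    rintro _ ⟨_, ⟨f, m, rfl⟩, _, ⟨g, n, rfl⟩, rfl⟩
    have h1 := (mem_range_iff (X := M.X ⊗[k] N.X) C' _).1 (hC' (m ⊗ₜ[k] n : M.X ⊗[k] N.X))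
      ((TensorProduct.lid k k).toLinearMap ∘ₗ TensorProduct.map f g)
    rw [hρ] at h1
    have key : ∀ (a : M.X ⊗[k] H) (b : N.X ⊗[k] H),
        slice ((TensorProduct.lid k k).toLinearMap ∘ₗ TensorProduct.map f g) (T (a ⊗ₜ b))
          = slice f a * slice g b := by
      intro a b
      induction a with
      | zero => simp
      | add x y hx hy => rw [TensorProduct.add_tmul, map_add, map_add, hx, hy, map_add, add_mul]
      | tmul x c =>
        induction b with
        | zero => simp
        | add x y hx hy => rw [TensorProduct.tmul_add, map_add, map_add, hx, hy, map_add, mul_add]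
        | tmul y d => simp [T, smul_smul, mul_comm]
    rw [key] at h1
    exact h1

lemma support_base (V : Submodule k H) (hV : IsSubcoalgebra k H V)
    (ρV : ↥V →ₗ[k] ↥V ⊗[k] H)
    (hρV : V.subtype.rTensor H ∘ₗ ρV =
      (Coalgebra.comul (R := k) (A := H)) ∘ₗ V.subtype) :
    (Comod.mk (X := ↥V) ρV).IsSupport V := by
  have h' : ∀ x : V, V.subtype.rTensor H (ρV x) = Coalgebra.comul (R := k) (x : H) :=
    fun x => LinearMap.congr_fun hρV x
  constructor
  · intro x
    change V at x
    obtain ⟨s, hs⟩ := hV x.1 x.2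
    refine ⟨s, ?_⟩
    apply Module.Flat.rTensor_preserves_injective_linearMap (M := H) V.subtype
      V.subtype_injective
    change _ = V.subtype.rTensor H (ρV x)
    rw [h', ← hs, ← LinearMap.comp_apply, LinearMap.rTensor_comp_lTensor]
  · intro C' hC' x hx
    have h1 := (mem_range_iff C' _).1 (hC' ⟨x, hx⟩)
      ((Coalgebra.counit (R := k) (A := H)) ∘ₗ V.subtype)
    have h2 : slice ((Coalgebra.counit (R := k) (A := H)) ∘ₗ V.subtype) (ρV ⟨x, hx⟩) = x := by
      have : slice (W := H) ((Coalgebra.counit (R := k) (A := H)) ∘ₗ V.subtype) (ρV ⟨x, hx⟩)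
          = TensorProduct.lid k H ((Coalgebra.counit (R := k) (A := H)).rTensor H
            (V.subtype.rTensor H (ρV ⟨x, hx⟩))) := by
        simp [slice, LinearMap.rTensor_comp]
      rw [this, h', Coalgebra.rTensor_counit_comul]
      simp
    exact h2 ▸ h1

lemma subcoalg_sum {ι : Type} (F : Finset ι) (C : ι → Submodule k H)
    (hC : ∀ α ∈ F, IsSubcoalgebra k H (C α)) : IsSubcoalgebra k H (∑ α ∈ F, C α) := by
  have hle : ∀ α ∈ F, C α ≤ ∑ α ∈ F, C α := by
    classical
    intro α hα
    rw [← Finset.add_sum_erase _ _ hα]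
    exact le_sup_left
  change (∑ α ∈ F, C α) ≤ (LinearMap.range (TensorProduct.map (∑ α ∈ F, C α).subtype
    (∑ α ∈ F, C α).subtype)).comap (Coalgebra.comul (R := k))
  have : ∀ α ∈ F, C α ≤ (LinearMap.range (TensorProduct.map (∑ α ∈ F, C α).subtype
      (∑ α ∈ F, C α).subtype)).comap (Coalgebra.comul (R := k)) := by
    intro α hα x hx
    obtain ⟨s, hs⟩ := hC α hα x hx
    refine ⟨TensorProduct.map (Submodule.inclusion (hle α hα)) (Submodule.inclusion (hle α hα)) s,
      ?_⟩
    rw [← hs, ← LinearMap.comp_apply, ← TensorProduct.map_comp]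
    rfl
  generalize (LinearMap.range (TensorProduct.map (∑ α ∈ F, C α).subtype
    (∑ α ∈ F, C α).subtype)).comap (Coalgebra.comul (R := k)) = P at this ⊢
  exact Finset.sum_induction _ (· ≤ P) (fun a b ha hb => sup_le ha hb) bot_le this

end Stmt15Aux

/-- second half of the proof of Lemma 2.3.  Let `H` be a
cosemisimple Hopf algebra over an algebraically closed field and
`V = ⊕_{α ∈ F} C_α` a direct sum of simple subcoalgebras of `H`.  Since
`Δ(V) ⊆ V ⊗ V ⊆ V ⊗ H`, comultiplication induces a coaction `ρ_V` on `V`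
(the hypothesis `hρV` states exactly that `ρ_V` is induced by `Δ`).  Then for
every `n ≥ 1` the comodules `V^{⊗ n}` (with coaction `Δ^{⊗n}` followed by
multiplication in the last tensor factors) and the subcoalgebra `V^n ⊆ H` (a
comodule via `Δ`) have the same support; namely `C(V^{⊗ n}) = V^n`. -/
theorem stmt15 (k : Type) [Field k] [IsAlgClosed k]
    (H : Type) [Ring H] [HopfAlgebra k H]
    (hcss : IsCosemisimple k H)
    (ι : Type) (F : Finset ι) (C : ι → Submodule k H)
    (hC : ∀ α ∈ F, IsSimpleSubcoalgebra k H (C α))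
    (hindep : iSupIndep fun a : ↥F => C a.1)
    (V : Submodule k H) (hV : V = ∑ α ∈ F, C α)
    (ρV : ↥V →ₗ[k] ↥V ⊗[k] H)
    (hρV : V.subtype.rTensor H ∘ₗ ρV =
      (Coalgebra.comul (R := k) (A := H)) ∘ₗ V.subtype)
    (n : ℕ) (hn : 1 ≤ n) :
    Comod.IsSupport ((Comod.mk (X := ↥V) ρV).tpow n) (V ^ n) := by
  have hsub : IsSubcoalgebra k H V := by
    rw [hV]; exact Stmt15Aux.subcoalg_sum F C fun α hα => (hC α hα).1
  have hbase := Stmt15Aux.support_base V hsub ρV hρV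
  obtain ⟨m, rfl⟩ : ∃ m, n = m + 1 := ⟨n - 1, by omega⟩
  clear hn
  induction m with
  | zero => simpa [Comod.tpow] using hbase
  | succ m ih =>
    rw [pow_succ]
    exact Stmt15Aux.support_tensor _ _ _ _ ih hbase
end
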